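/- arXiv:1009.0447 — 2 statements merged into one kernel-verified Lean document; each statement's English description precedes it below -/
import Mathlib

section
/- Let K be a number field, r a positive integer, and β ∈ O_K such that g = X^r − β is irreducible over K. Let η be a root of g and L = K(η). For every prime ideal P of O_K not dividing gcd(r, v_P(β)), the P-adic valuation of the relative discriminant D_{L|K} equals r·v_P(r) + r − gcd(r, v_P(β)). -/
open NumberField Polynomial UniqueFactorizationMonoid

/-- The `P`-adic valuation of an ideal of `𝓞 K`: the multiplicity of the prime `P` in the
factorisation of the ideal. -/
noncomputable def idealVal {K : Type*} [Field K] [NumberField K]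
    (P : Ideal (𝓞 K)) (I : Ideal (𝓞 K)) : ℕ :=
  letI := Classical.decEq (Ideal (𝓞 K))
  Multiset.count P (normalizedFactors I)

namespace RadExt

open IsDedekindDomain

lemma idealVal_mul {K : Type*} [Field K] [NumberField K] (P I J : Ideal (𝓞 K))
    (hI : I ≠ ⊥) (hJ : J ≠ ⊥) : idealVal P (I * J) = idealVal P I + idealVal P J := by
  classical
  unfold idealVal
  rw [normalizedFactors_mul hI hJ, Multiset.count_add]

lemma idealVal_eq_zero {K : Type*} [Field K] [NumberField K] (P I : Ideal (𝓞 K))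
    (x : 𝓞 K) (hx : x ∈ I) (hxP : x ∉ P) : idealVal P I = 0 := by
  classical
  unfold idealVal
  rw [Multiset.count_eq_zero]
  intro h
  exact hxP (Ideal.dvd_iff_le.mp (dvd_of_mem_normalizedFactors h) hx)

lemma intValuation_eq {K : Type*} [Field K] [NumberField K] (v : HeightOneSpectrum (𝓞 K))
    (x : 𝓞 K) (hx : x ≠ 0) :
    v.intValuation x = WithZero.exp (-(idealVal v.asIdeal (Ideal.span {x}) : ℤ)) := by
  classical
  have hs : (Ideal.span {x} : Ideal (𝓞 K)) ≠ 0 := by simpa using hx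
  rw [v.intValuation_eq_exp_neg_multiplicity hx]
  congr 3
  apply multiplicity_eq_of_emultiplicity_eq_some
  rw [UniqueFactorizationMonoid.emultiplicity_eq_count_normalizedFactors v.irreducible hs,
    normalize_eq]
  unfold idealVal
  congr!

/-- minimal polynomial of a radical generator -/
lemma minpoly_radical {K L : Type*} [Field K] [NumberField K] [Field L] [NumberField L]
    [Algebra K L] (n : ℕ) (hn : 0 < n) (x : 𝓞 L) (y : 𝓞 K) (hxy : x ^ n = algebraMap (𝓞 K) (𝓞 L) y)
    (hfin : Module.finrank K L = n) (hgen : Algebra.adjoin K {algebraMap (𝓞 L) L x} = ⊤) :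
    minpoly (𝓞 K) x = X ^ n - C y := by
  have hxInt : IsIntegral (𝓞 K) x := Algebra.IsIntegral.isIntegral x
  have hmon : (X ^ n - C y : (𝓞 K)[X]).Monic := monic_X_pow_sub_C y hn.ne'
  have hxIntK : IsIntegral K (algebraMap (𝓞 L) L x) := Algebra.IsIntegral.isIntegral _
  have hdeg : (minpoly (𝓞 K) x).natDegree = n := by
    have h1 : minpoly K (algebraMap (𝓞 L) L x) = (minpoly (𝓞 K) x).map (algebraMap (𝓞 K) K) :=
      minpoly.isIntegrallyClosed_eq_field_fractions K L hxInt
    have h2 : (minpoly K (algebraMap (𝓞 L) L x)).natDegree = n := by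
      rw [← hfin, ← IntermediateField.adjoin.finrank hxIntK]
      have : IntermediateField.adjoin K {algebraMap (𝓞 L) L x} = ⊤ := by
        apply IntermediateField.toSubalgebra_injective
        rw [IntermediateField.adjoin_simple_toSubalgebra_of_isAlgebraic hxIntK.isAlgebraic, hgen]
        rfl
      rw [this, IntermediateField.finrank_top']
    rw [h1, (minpoly.monic hxInt).natDegree_map] at h2
    exact h2
  have hdvd : minpoly (𝓞 K) x ∣ X ^ n - C y :=
    minpoly.isIntegrallyClosed_dvd hxInt (by simp [hxy])
  refine (Polynomial.eq_of_monic_of_dvd_of_natDegree_le (minpoly.monic hxInt) hmon hdvd ?_).symm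
  rw [hdeg, natDegree_X_pow_sub_C]

lemma aeval_deriv_radical {K L : Type*} [Field K] [NumberField K] [Field L] [NumberField L]
    [Algebra K L] (n : ℕ) (x : 𝓞 L) (y : 𝓞 K) :
    aeval x (derivative (X ^ n - C y : (𝓞 K)[X])) = (n : 𝓞 L) * x ^ (n - 1) := by
  simp [derivative_X_pow]

lemma exists_mem_different {K F : Type*} [Field K] [NumberField K] [Field F] [NumberField F]
    [Algebra K F] (P : Ideal (𝓞 K)) [hP : P.IsPrime] (d : ℕ) (hd : 0 < d) (γ : 𝓞 F) (u : 𝓞 K)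
    (hγ : γ ^ d = algebraMap (𝓞 K) (𝓞 F) u)
    (hfin : Module.finrank K F = d) (hgen : Algebra.adjoin K {algebraMap (𝓞 F) F γ} = ⊤)
    (hu : u ∉ P) (hdP : (d : 𝓞 K) ∉ P) :
    ∃ c : 𝓞 K, c ∉ P ∧ algebraMap (𝓞 K) (𝓞 F) c ∈ differentIdeal (𝓞 K) (𝓞 F) := by
  have h := aeval_derivative_mem_differentIdeal (𝓞 K) K F γ hgen
  rw [minpoly_radical d hd γ u hγ hfin hgen, aeval_deriv_radical] at h
  refine ⟨d * u, fun h => (hP.mem_or_mem h).elim hdP hu, ?_⟩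
  rw [map_mul, map_natCast, ← hγ]
  have := Ideal.mul_mem_right γ _ h
  rwa [mul_assoc, ← pow_succ, Nat.sub_add_cancel hd] at this

lemma exists_notMem_of_forall_prime {K F : Type*} [Field K] [NumberField K] [Field F] [NumberField F]
    [Algebra K F] (P : Ideal (𝓞 K)) [hP : P.IsPrime] (I : Ideal (𝓞 F))
    (h : ∀ q : Ideal (𝓞 F), q.IsPrime → q.comap (algebraMap (𝓞 K) (𝓞 F)) = P → ¬ I ≤ q) :
    ∃ c : 𝓞 K, c ∉ P ∧ algebraMap (𝓞 K) (𝓞 F) c ∈ I := by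
  by_contra! hc
  obtain ⟨Q, hQI, hQ, hQP⟩ := Ideal.exists_ideal_over_prime_of_isIntegral (S := 𝓞 F) P I (by
    intro x hx
    by_contra hxP
    exact hc x hxP hx)
  exact h Q hQ hQP hQI

/-- If all `b_j` are integral above `P`, a common denominator outside `P`. -/
lemma exists_denom {K F : Type*} [Field K] [NumberField K] [Field F] [NumberField F]
    [Algebra K F] (P : Ideal (𝓞 K)) [hP : P.IsPrime] (hP0 : P ≠ ⊥) (b : F)
    (h : ∀ q : HeightOneSpectrum (𝓞 F), q.asIdeal.comap (algebraMap (𝓞 K) (𝓞 F)) = P →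
      q.valuation F b ≤ 1) :
    ∃ c : 𝓞 K, c ∉ P ∧ ∃ z : 𝓞 F,
      algebraMap (𝓞 F) F (algebraMap (𝓞 K) (𝓞 F) c) * b = algebraMap (𝓞 F) F z := by
  let I : Ideal (𝓞 F) :=
    { carrier := {c | ∃ z : 𝓞 F, algebraMap (𝓞 F) F c * b = algebraMap (𝓞 F) F z}
      add_mem' := by
        rintro x y ⟨z, hz⟩ ⟨w, hw⟩
        exact ⟨z + w, by simp only [map_add, add_mul, hz, hw]⟩
      zero_mem' := ⟨0, by simp⟩
      smul_mem' := by
        rintro c x ⟨z, hz⟩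
        exact ⟨c * z, by simp only [smul_eq_mul, map_mul, mul_assoc, hz]⟩ }
  obtain ⟨c, hc, hcI⟩ := exists_notMem_of_forall_prime P I (by
    intro q hq hqP hle
    have hq0 : q ≠ ⊥ := by
      rintro rfl
      apply hP0
      rw [← hqP]
      exact Ideal.comap_bot_of_injective _ (FaithfulSMul.algebraMap_injective _ _)
    obtain ⟨n, ⟨d, hd⟩, hnd⟩ :=
      HeightOneSpectrum.exists_primeCompl_mul_eq_of_integer ⟨q, hq, hq0⟩ b (h ⟨q, hq, hq0⟩ hqP)
    exact hd (hle ⟨n, by rw [mul_comm]; exact hnd⟩))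
  exact ⟨c, hc, hcI⟩

lemma coeff_integral {F L : Type*} [Field F] [NumberField F] [Field L] [NumberField L]
    [Algebra F L] (q : HeightOneSpectrum (𝓞 F)) (m : ℕ) (hm : 0 < m) (ν : 𝓞 L) (ϖ : 𝓞 F)
    (hν : ν ^ m = algebraMap (𝓞 F) (𝓞 L) ϖ) (hϖ : q.intValuation ϖ = WithZero.exp (-1 : ℤ))
    (y : 𝓞 L) (b : ℕ → F)
    (hy : algebraMap (𝓞 L) L y =
      ∑ j ∈ Finset.range m, algebraMap F L (b j) * algebraMap (𝓞 L) L ν ^ j) :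
    ∀ j < m, q.valuation F (b j) ≤ 1 := by
  classical
  obtain ⟨Q, -, hQ, hQq⟩ := Ideal.exists_ideal_over_prime_of_isIntegral (S := 𝓞 L) q.asIdeal ⊥ (by
    intro x hx
    have : x = 0 := by simpa using hx
    simp [this])
  have hlo : Q.LiesOver q.asIdeal := ⟨hQq.symm⟩
  have hQ0 : Q ≠ ⊥ := by
    rintro rfl
    apply q.ne_bot
    rw [← hQq]
    exact Ideal.comap_bot_of_injective _ (FaithfulSMul.algebraMap_injective _ _)
  let W : HeightOneSpectrum (𝓞 L) := ⟨Q, hQ, hQ0⟩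
  have hloW : W.asIdeal.LiesOver q.asIdeal := hlo
  set e := q.asIdeal.ramificationIdx' W.asIdeal with he
  have hW : ∀ x : F, W.valuation L (algebraMap F L x) = q.valuation F x ^ e := fun x =>
    (HeightOneSpectrum.valuation_liesOver L q W x).symm
  have he0 : e ≠ 0 := Ideal.IsDedekindDomain.ramificationIdx'_ne_zero_of_liesOver W.asIdeal q.ne_bot
  set g := W.valuation L (algebraMap (𝓞 L) L ν) with hg
  have hgm : g ^ m = WithZero.exp (-(e : ℤ)) := by
    rw [hg, HeightOneSpectrum.valuation_of_algebraMap, ← map_pow, hν,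
      ← HeightOneSpectrum.intValuation_liesOver q W, hϖ, ← WithZero.exp_nsmul]
    congr 1
    simp [he]
  have hg0 : g ≠ 0 := by
    intro h
    rw [h, zero_pow hm.ne'] at hgm
    exact WithZero.exp_ne_zero hgm.symm
  obtain ⟨k, hk⟩ : ∃ k : ℤ, g = WithZero.exp (-k) := ⟨-WithZero.log g, by
    rw [neg_neg, WithZero.exp_log hg0]⟩
  have hkm : k * m = e := by
    rw [hk, ← WithZero.exp_nsmul, WithZero.exp_inj] at hgm
    simp at hgm
    linarith
  have hk0 : 0 < k := by
    have : (0 : ℤ) < e := by positivity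
    rw [← hkm] at this
    exact pos_of_mul_pos_left this (by positivity)
  let f : ℕ → L := fun j => algebraMap F L (b j) * algebraMap (𝓞 L) L ν ^ j
  have hf : ∀ j, ∀ t : ℤ, q.valuation F (b j) = WithZero.exp t →
      W.valuation L (f j) = WithZero.exp (k * (m * t - j)) := by
    intro j t ht
    simp only [f, map_mul, map_pow, hW, ht]
    rw [← hg, hk, ← WithZero.exp_nsmul, ← WithZero.exp_nsmul, ← WithZero.exp_add]
    congr 1
    simp only [nsmul_eq_mul, ← hkm]
    ring
  have hval : ∀ j, b j ≠ 0 → ∃ t : ℤ, q.valuation F (b j) = WithZero.exp t := by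
    intro j hj
    exact ⟨WithZero.log (q.valuation F (b j)), by
      rw [WithZero.exp_log ((Valuation.ne_zero_iff _).mpr hj)]⟩
  obtain ⟨j0, hj0, hmax⟩ := Finset.exists_max_image (Finset.range m)
    (fun j => W.valuation L (f j)) ⟨0, by simpa using hm⟩
  have hle : W.valuation L (f j0) ≤ 1 := by
    by_cases hb : b j0 = 0
    · simp [f, hb]
    obtain ⟨t0, ht0⟩ := hval j0 hb
    have : W.valuation L (∑ j ∈ Finset.range m, f j) = W.valuation L (f j0) := by
      apply Valuation.map_sum_eq_of_lt _ hj0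
      intro i hi
      simp only [Finset.mem_sdiff, Finset.mem_singleton] at hi
      refine lt_of_le_of_ne (hmax i hi.1) ?_
      intro heq
      rw [hf j0 t0 ht0] at heq
      have hbi : b i ≠ 0 := by
        intro h
        simp only [f, h, map_zero, zero_mul] at heq
        exact WithZero.exp_ne_zero heq.symm
      obtain ⟨t, ht⟩ := hval i hbi
      rw [hf i t ht, WithZero.exp_inj] at heq
      have h1 : (m : ℤ) * t - i = m * t0 - j0 := mul_left_cancel₀ hk0.ne' heq
      apply hi.2
      have hi1 := Finset.mem_range.mp hi.1
      have hj1 := Finset.mem_range.mp hj0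
      have h2 : (m : ℤ) ∣ (i : ℤ) - j0 := ⟨t - t0, by linarith⟩
      have h3 := Int.eq_zero_of_abs_lt_dvd h2 (by rw [abs_lt]; omega)
      omega
    rw [← this, ← hy]
    exact HeightOneSpectrum.valuation_le_one W y
  intro j hj
  by_cases hb : b j = 0
  · simp [hb]
  obtain ⟨t, ht⟩ := hval j hb
  have h1 := (hmax j (Finset.mem_range.mpr hj)).trans hle
  rw [hf j t ht, ← WithZero.exp_zero, WithZero.exp_le_exp] at h1
  rw [ht, ← WithZero.exp_zero, WithZero.exp_le_exp]
  have h2 : (m : ℤ) * t - j ≤ 0 := by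
    by_contra! h
    have := mul_pos hk0 h
    omega
  by_contra! h
  have : (m : ℤ) * 1 ≤ m * t := by gcongr; omega
  omega

lemma exists_mem_conductor {K F L : Type*} [Field K] [NumberField K] [Field F] [NumberField F]
    [Field L] [NumberField L] [Algebra K F] [Algebra F L] [Algebra K L] [IsScalarTower K F L]
    (P : Ideal (𝓞 K)) [hP : P.IsPrime] (hP0 : P ≠ ⊥) (m : ℕ) (hm : 0 < m) (ν : 𝓞 L) (ϖ : 𝓞 F)
    (hν : ν ^ m = algebraMap (𝓞 F) (𝓞 L) ϖ)
    (hϖ : ∀ q : HeightOneSpectrum (𝓞 F), q.asIdeal.comap (algebraMap (𝓞 K) (𝓞 F)) = P →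
      q.intValuation ϖ = WithZero.exp (-1 : ℤ))
    (hfin : Module.finrank F L = m) (hgen : Algebra.adjoin F {algebraMap (𝓞 L) L ν} = ⊤) :
    ∃ c : 𝓞 K, c ∉ P ∧ algebraMap (𝓞 K) (𝓞 L) c ∈ conductor (𝓞 F) ν := by
  classical
  have hxInt : IsIntegral F (algebraMap (𝓞 L) L ν) := Algebra.IsIntegral.isIntegral _
  let pb := PowerBasis.ofAdjoinEqTop hxInt hgen
  have hpbgen : pb.gen = algebraMap (𝓞 L) L ν := PowerBasis.ofAdjoinEqTop_gen hxInt hgen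
  have hdim : pb.dim = m := by rw [← pb.finrank, hfin]
  have key : ∀ y : 𝓞 L, ∃ c : 𝓞 K, c ∉ P ∧
      algebraMap (𝓞 K) (𝓞 L) c * y ∈ Algebra.adjoin (𝓞 F) {ν} := by
    intro y
    obtain ⟨b, hb⟩ : ∃ b : ℕ → F, algebraMap (𝓞 L) L y =
        ∑ j ∈ Finset.range m, algebraMap F L (b j) * algebraMap (𝓞 L) L ν ^ j := by
      have h1 := pb.basis.sum_repr (algebraMap (𝓞 L) L y)
      refine ⟨fun j => if h : j < pb.dim then pb.basis.repr (algebraMap (𝓞 L) L y) ⟨j, h⟩ else 0, ?_⟩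
      rw [← hdim, Finset.sum_range]
      refine h1.symm.trans (Finset.sum_congr rfl fun i _ => ?_)
      simp [Algebra.smul_def, hpbgen]
    have hbi : ∀ j : ℕ, ∃ c : 𝓞 K, c ∉ P ∧ (j < m → ∃ z : 𝓞 F,
        algebraMap (𝓞 F) F (algebraMap (𝓞 K) (𝓞 F) c) * b j = algebraMap (𝓞 F) F z) := by
      intro j
      by_cases hj : j < m
      · obtain ⟨c, hc, hz⟩ := exists_denom P hP0 (b j) (fun q hq =>
          coeff_integral q m hm ν ϖ hν (hϖ q hq) y b hb j hj)
        exact ⟨c, hc, fun _ => hz⟩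
      · exact ⟨1, (Ideal.ne_top_iff_one _).mp hP.ne_top, fun h => absurd h hj⟩
    choose c hc hz using hbi
    refine ⟨∏ j ∈ Finset.range m, c j, ?_, ?_⟩
    · intro h
      obtain ⟨j, -, hj⟩ := (hP.prod_mem_iff).mp h
      exact hc j hj
    · have hz' : ∀ j ∈ Finset.range m, ∃ z : 𝓞 F, algebraMap (𝓞 F) F (algebraMap (𝓞 K) (𝓞 F)
          (∏ j ∈ Finset.range m, c j)) * b j = algebraMap (𝓞 F) F z := by
        intro j hj
        obtain ⟨z, hz⟩ := hz j (Finset.mem_range.mp hj)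
        refine ⟨algebraMap (𝓞 K) (𝓞 F) (∏ i ∈ (Finset.range m).erase j, c i) * z, ?_⟩
        rw [← Finset.mul_prod_erase _ _ hj, map_mul (algebraMap (𝓞 F) F), ← hz]
        simp only [map_mul]
        ring
      choose! z hz' using hz'
      have : algebraMap (𝓞 K) (𝓞 L) (∏ j ∈ Finset.range m, c j) * y =
          ∑ j ∈ Finset.range m, algebraMap (𝓞 F) (𝓞 L) (z j) * ν ^ j := by
        apply FaithfulSMul.algebraMap_injective (𝓞 L) L
        rw [map_mul, hb, map_sum, Finset.mul_sum]
        refine Finset.sum_congr rfl fun j hj => ?_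
        have h2 := congrArg (algebraMap F L) (hz' j hj)
        rw [map_mul, map_pow, ← mul_assoc]
        congr 1
        rw [map_mul] at h2
        rw [IsScalarTower.algebraMap_apply (𝓞 K) (𝓞 F) (𝓞 L),
          ← IsScalarTower.algebraMap_apply (𝓞 F) (𝓞 L) L,
          ← IsScalarTower.algebraMap_apply (𝓞 F) (𝓞 L) L,
          IsScalarTower.algebraMap_apply (𝓞 F) F L, IsScalarTower.algebraMap_apply (𝓞 F) F L]
        exact h2
      rw [this]
      refine Subalgebra.sum_mem _ fun j _ => ?_
      refine Subalgebra.mul_mem _ (Subalgebra.algebraMap_mem _ _) (Subalgebra.pow_mem _ ?_ _)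
      exact Algebra.subset_adjoin rfl
  choose c hc hcy using key
  obtain ⟨s, hs⟩ := (Module.Finite.fg_top : (⊤ : Submodule (𝓞 F) (𝓞 L)).FG)
  refine ⟨∏ y ∈ s, c y, ?_, ?_⟩
  · intro h
    obtain ⟨j, -, hj⟩ := (hP.prod_mem_iff).mp h
    exact hc j hj
  · rw [mem_conductor_iff]
    intro x
    have hx : x ∈ Submodule.span (𝓞 F) (s : Set (𝓞 L)) := by rw [hs]; trivial
    induction hx using Submodule.span_induction with
    | mem y hy =>
      rw [← Finset.prod_erase_mul _ _ hy, map_mul, mul_assoc]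
      refine Subalgebra.mul_mem _ ?_ (hcy y)
      rw [IsScalarTower.algebraMap_apply (𝓞 K) (𝓞 F) (𝓞 L)]
      exact Subalgebra.algebraMap_mem _ _
    | zero => simp
    | add x y _ _ hx hy => rw [mul_add]; exact Subalgebra.add_mem _ hx hy
    | smul a x _ hx => rw [mul_smul_comm]; exact Subalgebra.smul_mem _ hx a

lemma intNorm_algebraMap' {K L : Type*} [Field K] [NumberField K] [Field L] [NumberField L]
    [Algebra K L] (x : 𝓞 K) :
    Algebra.intNorm (𝓞 K) (𝓞 L) (algebraMap (𝓞 K) (𝓞 L) x) = x ^ Module.finrank K L := by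
  apply FaithfulSMul.algebraMap_injective (𝓞 K) K
  rw [Algebra.algebraMap_intNorm (K := K) (L := L), ← IsScalarTower.algebraMap_apply,
    IsScalarTower.algebraMap_apply (𝓞 K) K L, Algebra.norm_algebraMap, map_pow]

lemma idealVal_relNorm_eq_zero {K L : Type*} [Field K] [NumberField K] [Field L] [NumberField L]
    [Algebra K L] (P : Ideal (𝓞 K)) [hP : P.IsPrime] (I : Ideal (𝓞 L)) (c : 𝓞 K) (hc : c ∉ P)
    (hcI : algebraMap (𝓞 K) (𝓞 L) c ∈ I) : idealVal P (Ideal.spanNorm (𝓞 K) I) = 0 := by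
  apply idealVal_eq_zero P _ (c ^ Module.finrank K L)
  · rw [← intNorm_algebraMap' (L := L)]
    exact Ideal.intNorm_mem_spanNorm (𝓞 K) hcI
  · exact fun h => hc (hP.mem_of_pow_mem _ h)

lemma tower_val {K F L : Type*} [Field K] [NumberField K] [Field F] [NumberField F]
    [Field L] [NumberField L] [Algebra K F] [Algebra F L] [Algebra K L] [IsScalarTower K F L]
    (v : HeightOneSpectrum (𝓞 K)) (d m : ℕ) (hd : 0 < d) (hm : 0 < m)
    (γ : 𝓞 F) (u : 𝓞 K) (hγ : γ ^ d = algebraMap (𝓞 K) (𝓞 F) u)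
    (hfinF : Module.finrank K F = d) (hgenF : Algebra.adjoin K {algebraMap (𝓞 F) F γ} = ⊤)
    (hu : u ∉ v.asIdeal) (hdP : (d : 𝓞 K) ∉ v.asIdeal)
    (ν : 𝓞 L) (ϖ : 𝓞 F) (w : 𝓞 K) (hν : ν ^ m = algebraMap (𝓞 F) (𝓞 L) ϖ)
    (hϖ : ϖ ^ d = algebraMap (𝓞 K) (𝓞 F) w)
    (hw : v.intValuation w = WithZero.exp (-(d : ℤ)))
    (hfinL : Module.finrank F L = m) (hgenL : Algebra.adjoin F {algebraMap (𝓞 L) L ν} = ⊤) :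
    idealVal v.asIdeal (Ideal.spanNorm (𝓞 K) (differentIdeal (𝓞 K) (𝓞 L))) =
      (d * m) * idealVal v.asIdeal (Ideal.span {(m : 𝓞 K)}) + (m - 1) * d := by
  have hvmax : v.asIdeal.IsMaximal := v.isMaximal
  obtain ⟨c1, hc1, hc1D⟩ := exists_mem_different v.asIdeal d hd γ u hγ hfinF hgenF hu hdP
  have hpow : ∀ (t : WithZero (Multiplicative ℤ)), t ^ d = WithZero.exp (-(d : ℤ)) →
      t = WithZero.exp (-1 : ℤ) := by
    intro t ht
    have : WithZero.exp (-(d : ℤ)) = WithZero.exp (-1 : ℤ) ^ d := by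
      rw [← WithZero.exp_nsmul]; simp
    rw [this] at ht
    exact (pow_left_inj₀ zero_le zero_le hd.ne').mp ht
  have hq : ∀ q : HeightOneSpectrum (𝓞 F),
      q.asIdeal.comap (algebraMap (𝓞 K) (𝓞 F)) = v.asIdeal →
      q.intValuation ϖ = WithZero.exp (-1 : ℤ) := by
    intro q hqv
    have hlo : q.asIdeal.LiesOver v.asIdeal := ⟨hqv.symm⟩
    have he0 := Ideal.IsDedekindDomain.ramificationIdx'_ne_zero_of_liesOver q.asIdeal v.ne_bot
    have hle : v.asIdeal.map (algebraMap (𝓞 K) (𝓞 F)) ≤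
      q.asIdeal ^ v.asIdeal.ramificationIdx' q.asIdeal := Ideal.le_pow_ramificationIdx'
    have hdvd := pow_sub_one_dvd_differentIdeal (𝓞 K) q.asIdeal _ v.ne_bot
      (Ideal.dvd_iff_le.mpr hle)
    have he1 : v.asIdeal.ramificationIdx' q.asIdeal = 1 := by
      by_contra hne
      have h1 : q.asIdeal ∣ differentIdeal (𝓞 K) (𝓞 F) :=
        (dvd_pow_self _ (by omega)).trans hdvd
      have h2 := Ideal.dvd_iff_le.mp h1 hc1D
      apply hc1
      rw [← hqv]
      exact h2
    apply hpow
    rw [← map_pow, hϖ, ← HeightOneSpectrum.intValuation_liesOver v q, he1, pow_one, hw]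
  obtain ⟨c2, hc2, hc2C⟩ :=
    exists_mem_conductor v.asIdeal v.ne_bot m hm ν ϖ hν hq hfinL hgenL
  have hcond := conductor_mul_differentIdeal (𝓞 F) F L ν hgenL
  rw [minpoly_radical m hm ν ϖ hν hfinL hgenL, aeval_deriv_radical] at hcond
  have htow := differentIdeal_eq_differentIdeal_mul_differentIdeal (𝓞 K) (𝓞 F) (𝓞 L)
  have hD : conductor (𝓞 F) ν * differentIdeal (𝓞 K) (𝓞 L) =
      Ideal.span {(m : 𝓞 L) * ν ^ (m - 1)} *
        (differentIdeal (𝓞 K) (𝓞 F)).map (algebraMap (𝓞 F) (𝓞 L)) := by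
    rw [htow, ← mul_assoc, hcond]
  have hw0 : w ≠ 0 := by
    rintro rfl
    rw [map_zero] at hw
    exact WithZero.exp_ne_zero hw.symm
  have hνr : ν ^ (d * m) = algebraMap (𝓞 K) (𝓞 L) w := by
    rw [mul_comm, pow_mul, hν, ← map_pow, hϖ, ← IsScalarTower.algebraMap_apply]
  have hν0 : ν ≠ 0 := by
    rintro rfl
    rw [zero_pow (by positivity)] at hνr
    apply hw0
    apply FaithfulSMul.algebraMap_injective (𝓞 K) (𝓞 L)
    rw [← hνr, map_zero]
  have hm0 : (m : 𝓞 L) ≠ 0 := by exact_mod_cast hm.ne'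
  have hx0 : (m : 𝓞 L) * ν ^ (m - 1) ≠ 0 := mul_ne_zero hm0 (pow_ne_zero _ hν0)
  have hfin : Module.finrank K L = d * m := by
    rw [← Module.finrank_mul_finrank K F L, hfinF, hfinL]
  have hC0 : conductor (𝓞 F) ν ≠ ⊥ := by
    intro h
    rw [h, Ideal.bot_mul, eq_comm, Ideal.span_singleton_eq_bot] at hcond
    exact hx0 hcond
  have hDF0 : differentIdeal (𝓞 K) (𝓞 F) ≠ ⊥ := differentIdeal_ne_bot
  have hDL0 : differentIdeal (𝓞 K) (𝓞 L) ≠ ⊥ := differentIdeal_ne_bot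
  have hN := congrArg (fun I => idealVal v.asIdeal (Ideal.spanNorm (𝓞 K) I)) hD
  simp only [Ideal.spanNorm_mul] at hN
  rw [idealVal_mul _ _ _ (by simpa using hC0) (by simpa using hDL0),
    idealVal_mul _ _ _ (by rw [Ne, Ideal.spanNorm_eq_bot_iff]; simpa using hx0) (by
      rw [Ne, Ideal.spanNorm_eq_bot_iff,
        Ideal.map_eq_bot_iff_of_injective (FaithfulSMul.algebraMap_injective _ _)]
      exact hDF0),
    idealVal_relNorm_eq_zero v.asIdeal _ c2 hc2 hc2C,
    idealVal_relNorm_eq_zero v.asIdeal ((differentIdeal (𝓞 K) (𝓞 F)).map _) c1 hc1 (by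
      rw [IsScalarTower.algebraMap_apply (𝓞 K) (𝓞 F) (𝓞 L)]
      exact Ideal.mem_map_of_mem _ hc1D), zero_add, add_zero] at hN
  rw [hN, Ideal.spanNorm_singleton]
  set n := Algebra.intNorm (𝓞 K) (𝓞 L) ν with hn
  have hnv : v.intValuation n = WithZero.exp (-(d : ℤ)) := by
    have h1 : n ^ (d * m) = w ^ (d * m) := by
      rw [hn, ← map_pow, hνr, intNorm_algebraMap', hfin]
    have h2 := congrArg v.intValuation h1
    rw [map_pow, map_pow, hw] at h2
    exact (pow_left_inj₀ zero_le zero_le (by positivity)).mp h2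
  have hmK : (m : 𝓞 K) ≠ 0 := by exact_mod_cast hm.ne'
  have hnorm : Algebra.intNorm (𝓞 K) (𝓞 L) ((m : 𝓞 L) * ν ^ (m - 1)) =
      (m : 𝓞 K) ^ (d * m) * n ^ (m - 1) := by
    rw [map_mul, map_pow, ← map_natCast (algebraMap (𝓞 K) (𝓞 L)), intNorm_algebraMap', hfin]
  have hne : Algebra.intNorm (𝓞 K) (𝓞 L) ((m : 𝓞 L) * ν ^ (m - 1)) ≠ 0 := by
    rw [Ne, Algebra.intNorm_eq_zero]; exact hx0
  have hfinal := intValuation_eq v _ hne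
  rw [hnorm, map_mul, map_pow, map_pow, hnv, intValuation_eq v _ hmK, ← WithZero.exp_nsmul,
    ← WithZero.exp_nsmul, ← WithZero.exp_add, WithZero.exp_inj] at hfinal
  rw [hnorm]
  simp only [nsmul_eq_mul] at hfinal
  zify
  push_cast at hfinal ⊢
  linarith

lemma exists_scale {K : Type*} [Field K] [NumberField K] (v : HeightOneSpectrum (𝓞 K))
    (κ : K) (hκ : v.valuation K κ ≤ 1) (n : ℕ) (hn : 0 < n) :
    ∃ c u : 𝓞 K, c ≠ 0 ∧ algebraMap (𝓞 K) K c ^ n * κ = algebraMap (𝓞 K) K u ∧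
      v.intValuation u = v.valuation K κ := by
  obtain ⟨x, ⟨c, hc⟩, hx⟩ := HeightOneSpectrum.exists_primeCompl_mul_eq_of_integer v κ hκ
  have hc' : c ∉ v.asIdeal := hc
  simp only at hx
  have h1 : algebraMap (𝓞 K) K c ^ n * κ = algebraMap (𝓞 K) K (c ^ (n - 1) * x) := by
    obtain ⟨k, rfl⟩ : ∃ k, n = k + 1 := ⟨n - 1, by omega⟩
    rw [map_mul, ← hx, map_pow, Nat.add_sub_cancel, pow_succ]
    ring
  refine ⟨c, c ^ (n - 1) * x, ?_, h1, ?_⟩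
  · rintro rfl
    exact hc' v.asIdeal.zero_mem
  · refine (HeightOneSpectrum.valuation_of_algebraMap (K := K) v _).symm.trans ?_
    change v.valuation K (algebraMap (𝓞 K) K _) = _
    rw [← h1, map_mul, map_pow,
      HeightOneSpectrum.valuation_eq_one_iff_notMem v |>.mpr hc', one_pow, one_mul]

lemma exists_int {K L : Type*} [Field K] [NumberField K] [Field L] [NumberField L]
    [Algebra K L] (x : L) (n : ℕ) (hn : 0 < n) (u : 𝓞 K)
    (h : x ^ n = algebraMap K L (algebraMap (𝓞 K) K u)) :
    ∃ y : 𝓞 L, algebraMap (𝓞 L) L y = x ∧ y ^ n = algebraMap (𝓞 K) (𝓞 L) u := by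
  have hxInt : IsIntegral ℤ x := by
    refine IsIntegral.of_pow hn ?_
    rw [h]
    exact (RingOfIntegers.isIntegral_coe u).map (algebraMap K L).toIntAlgHom
  obtain ⟨y, hy⟩ : ∃ y : 𝓞 L, algebraMap (𝓞 L) L y = x := ⟨⟨x, hxInt⟩, rfl⟩
  refine ⟨y, hy, ?_⟩
  apply FaithfulSMul.algebraMap_injective (𝓞 L) L
  rw [map_pow, hy, h]
  rfl

lemma algebra_adjoin_eq_top {K L : Type*} [Field K] [Field L] [Algebra K L] [FiniteDimensional K L]
    (x : L) (h : IntermediateField.adjoin K {x} = ⊤) : Algebra.adjoin K {x} = ⊤ := by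
  rw [← IntermediateField.adjoin_simple_toSubalgebra_of_isAlgebraic (Algebra.IsAlgebraic.isAlgebraic x), h]
  rfl

lemma finrank_le {K L : Type*} [Field K] [Field L] [Algebra K L] [FiniteDimensional K L]
    (x : L) (h : IntermediateField.adjoin K {x} = ⊤) (n : ℕ) (hn : 0 < n) (y : K)
    (hxy : x ^ n = algebraMap K L y) : Module.finrank K L ≤ n := by
  have hxInt : IsIntegral K x := Algebra.IsIntegral.isIntegral x
  rw [← IntermediateField.finrank_top', ← h, IntermediateField.adjoin.finrank hxInt]
  have : minpoly K x ∣ X ^ n - C y := minpoly.dvd _ _ (by simp [hxy])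
  calc _ ≤ _ := natDegree_le_of_dvd this (monic_X_pow_sub_C y hn.ne').ne_zero
    _ = n := natDegree_X_pow_sub_C

lemma main_tower {K F L : Type*} [Field K] [NumberField K] [Field F] [NumberField F]
    [Field L] [NumberField L] [Algebra K F] [Algebra F L] [Algebra K L] [IsScalarTower K F L]
    (v : HeightOneSpectrum (𝓞 K)) (d m a : ℕ) (hd : 0 < d) (hm : 0 < m) (hcop : Nat.Coprime a m)
    (β : 𝓞 K) (hβ : β ≠ 0) (hβv : v.intValuation β = WithZero.exp (-((d * a : ℕ) : ℤ)))
    (hdP : (d : 𝓞 K) ∉ v.asIdeal)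
    (η : L) (θ : F) (hηθ : η ^ m = algebraMap F L θ)
    (hθ : θ ^ d = algebraMap K F (algebraMap (𝓞 K) K β))
    (hgenF : IntermediateField.adjoin K {θ} = ⊤) (hgenL : IntermediateField.adjoin F {η} = ⊤)
    (hfin : Module.finrank K L = d * m) :
    idealVal v.asIdeal (Ideal.spanNorm (𝓞 K) (differentIdeal (𝓞 K) (𝓞 L))) =
      (d * m) * idealVal v.asIdeal (Ideal.span {(m : 𝓞 K)}) + (m - 1) * d := by
  have hF : Module.finrank K F ≤ d := finrank_le θ hgenF d hd _ hθ
  have hL : Module.finrank F L ≤ m := finrank_le η hgenL m hm _ hηθ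
  have hmul := Module.finrank_mul_finrank K F L
  rw [hfin] at hmul
  have hFe : Module.finrank K F = d := by
    refine le_antisymm hF ?_
    by_contra! h
    have : Module.finrank K F * Module.finrank F L < d * m :=
      Nat.mul_lt_mul_of_lt_of_le h hL hm
    omega
  have hLe : Module.finrank F L = m := by
    rw [hFe] at hmul
    exact Nat.eq_of_mul_eq_mul_left hd hmul
  have hβK : algebraMap (𝓞 K) K β ≠ 0 := by
    simpa using hβ
  have hθ0 : θ ≠ 0 := by
    rintro rfl
    rw [zero_pow hd.ne'] at hθ
    exact hβK ((map_eq_zero (algebraMap K F)).mp hθ.symm)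
  have hη0 : η ≠ 0 := by
    rintro rfl
    rw [zero_pow hm.ne'] at hηθ
    exact hθ0 ((map_eq_zero (algebraMap F L)).mp hηθ.symm)
  obtain ⟨s, t, hst⟩ : ∃ (s : ℕ) (t : ℤ), (s : ℤ) * a - t * m = 1 := by
    obtain ⟨x, y, hxy⟩ := Nat.isCoprime_iff_coprime.mpr hcop
    refine ⟨(x % m).toNat, -(y + (x / m) * a), ?_⟩
    rw [Int.toNat_of_nonneg (Int.emod_nonneg _ (by positivity)), Int.emod_def]
    linarith
  obtain ⟨π, hπ⟩ := v.valuation_exists_uniformizer K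
  have hπ0 : π ≠ 0 := by
    rintro rfl
    rw [map_zero] at hπ
    exact WithZero.exp_ne_zero hπ.symm
  have hπz : ∀ n : ℤ, v.valuation K (π ^ n) = WithZero.exp (-n) := by
    intro n
    rw [map_zpow₀, hπ, ← WithZero.exp_zsmul]
    simp
  have hβv' : v.valuation K (algebraMap (𝓞 K) K β) = WithZero.exp (-((d * a : ℕ) : ℤ)) := by
    rw [HeightOneSpectrum.valuation_of_algebraMap, hβv]
  -- the element γ
  have hκ1 : v.valuation K (algebraMap (𝓞 K) K β * (π ^ (-(a : ℤ))) ^ d) = 1 := by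
    rw [map_mul, map_pow, hπz, hβv', ← WithZero.exp_nsmul, ← WithZero.exp_add, ← WithZero.exp_zero]
    congr 1
    push_cast
    simp
  obtain ⟨c1, u, hc1, hu, huv⟩ := exists_scale v _ hκ1.le d hd
  rw [hκ1, HeightOneSpectrum.intValuation_eq_one_iff] at huv
  obtain ⟨γ, hγ, hγd⟩ := exists_int (K := K)
    (algebraMap K F (algebraMap (𝓞 K) K c1 * π ^ (-(a : ℤ))) * θ) d hd u (by
      rw [← hu, mul_pow, hθ, ← map_pow, ← map_mul]
      congr 1
      ring)
  have hc1K : algebraMap (𝓞 K) K c1 ≠ 0 := by simpa using hc1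
  have hgenγ : Algebra.adjoin K {algebraMap (𝓞 F) F γ} = ⊤ := by
    apply algebra_adjoin_eq_top
    rw [eq_top_iff, ← hgenF, IntermediateField.adjoin_simple_le_iff]
    have h1 : θ = algebraMap K F (algebraMap (𝓞 K) K c1 * π ^ (-(a : ℤ)))⁻¹ *
        algebraMap (𝓞 F) F γ := by
      rw [hγ, ← mul_assoc, ← map_mul, inv_mul_cancel₀ (mul_ne_zero hc1K (zpow_ne_zero _ hπ0)),
        map_one, one_mul]
    have h2 := (IntermediateField.adjoin K {algebraMap (𝓞 F) F γ}).mul_mem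
      (IntermediateField.algebraMap_mem _ (algebraMap (𝓞 K) K c1 * π ^ (-(a : ℤ)))⁻¹)
      (IntermediateField.mem_adjoin_simple_self K (algebraMap (𝓞 F) F γ))
    rwa [← h1] at h2
  -- the element ν
  have hκ2 : v.valuation K (algebraMap (𝓞 K) K β ^ s * (π ^ (-t)) ^ (m * d)) =
      WithZero.exp (-(d : ℤ)) := by
    rw [map_mul, map_pow, map_pow, hπz, hβv', ← WithZero.exp_nsmul, ← WithZero.exp_nsmul,
      ← WithZero.exp_add]
    congr 1
    simp only [nsmul_eq_mul]
    push_cast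
    linear_combination (-(d : ℤ)) * hst
  obtain ⟨c2, w, hc2, hw, hwv⟩ := exists_scale v _ (show v.valuation K _ ≤ 1 by
    rw [hκ2, ← WithZero.exp_zero, WithZero.exp_le_exp]; simp) (m * d) (by positivity)
  rw [hκ2] at hwv
  obtain ⟨ϖ, hϖ, hϖd⟩ := exists_int (K := K)
    (algebraMap K F (algebraMap (𝓞 K) K c2 * π ^ (-t)) ^ m * θ ^ s) d hd w (by
      rw [← hw, mul_pow, ← pow_mul, ← pow_mul, mul_comm s d, pow_mul θ d s, hθ, ← map_pow, ← map_pow,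
        ← map_mul]
      congr 1
      ring)
  obtain ⟨ν, hν, hνm⟩ := exists_int (K := F)
    (algebraMap K L (algebraMap (𝓞 K) K c2 * π ^ (-t)) * η ^ s) m hm ϖ (by
      rw [hϖ, mul_pow, ← pow_mul η, mul_comm s m, pow_mul η, hηθ, map_mul (algebraMap F L),
        map_pow, map_pow, ← IsScalarTower.algebraMap_apply K F L])
  have hc2K : algebraMap (𝓞 K) K c2 ≠ 0 := by simpa using hc2
  have hgenν : Algebra.adjoin F {algebraMap (𝓞 L) L ν} = ⊤ := by
    apply algebra_adjoin_eq_top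
    rw [eq_top_iff, ← hgenL, IntermediateField.adjoin_simple_le_iff]
    set E := IntermediateField.adjoin F {algebraMap (𝓞 L) L ν}
    have h1 : η ^ s = algebraMap F L (algebraMap K F (algebraMap (𝓞 K) K c2 * π ^ (-t))⁻¹) *
        algebraMap (𝓞 L) L ν := by
      rw [hν, ← mul_assoc, ← IsScalarTower.algebraMap_apply, ← map_mul,
        inv_mul_cancel₀ (mul_ne_zero hc2K (zpow_ne_zero _ hπ0)), map_one, one_mul]
    have h2 : η ^ s ∈ E := by
      rw [h1]
      exact E.mul_mem (E.algebraMap_mem _) (IntermediateField.mem_adjoin_simple_self F _)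
    have h3 : η ^ m ∈ E := by
      rw [hηθ]
      exact E.algebraMap_mem _
    have h4 : η = (η ^ s) ^ a * (η ^ m) ^ (-t) := by
      rw [← zpow_natCast η m, ← zpow_mul, ← pow_mul, ← zpow_natCast η, ← zpow_add₀ hη0]
      have : (((s * a : ℕ) : ℤ) + (m : ℤ) * -t) = 1 := by
        push_cast
        linarith
      rw [this, zpow_one]
    rw [h4]
    exact E.mul_mem (pow_mem h2 a) (zpow_mem h3 _)
  exact tower_val v d m hd hm γ u hγd hFe hgenγ huv hdP ν ϖ w hνm hϖd hwv hLe hgenν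

lemma main_ne_zero {K L : Type*} [Field K] [NumberField K]
    [Field L] [NumberField L] [Algebra K L]
    (r : ℕ) (hr : 0 < r) (β : 𝓞 K) (hβ : β ≠ 0)
    (hirr : Irreducible (X ^ r - C (algebraMap (𝓞 K) K β) : K[X]))
    (η : L) (hroot : aeval η (X ^ r - C (algebraMap (𝓞 K) K β) : K[X]) = 0)
    (hgen : IntermediateField.adjoin K {η} = ⊤)
    (P : Ideal (𝓞 K)) (hP : P.IsPrime) (hPne : P ≠ ⊥)
    (hnd : ((Nat.gcd r (idealVal P (Ideal.span {β})) : ℕ) : 𝓞 K) ∉ P) :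
    idealVal P (Ideal.spanNorm (𝓞 K) (differentIdeal (𝓞 K) (𝓞 L))) =
      r * idealVal P (Ideal.span {(r : 𝓞 K)}) + r - Nat.gcd r (idealVal P (Ideal.span {β})) := by
  let v : HeightOneSpectrum (𝓞 K) := ⟨P, hP, hPne⟩
  have hβv := intValuation_eq v β hβ
  change v.intValuation β = WithZero.exp (-((idealVal P (Ideal.span {β}) : ℕ) : ℤ)) at hβv
  set A := idealVal P (Ideal.span {β})
  have hd : 0 < Nat.gcd r A := Nat.gcd_pos_of_pos_left _ hr
  obtain ⟨m, a, hcop, hrm, hAa⟩ := Nat.exists_coprime r A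
  set d := Nat.gcd r A
  have hm : 0 < m := Nat.pos_of_mul_pos_right (hrm ▸ hr)
  have hηr : η ^ r = algebraMap K L (algebraMap (𝓞 K) K β) := by
    have : η ^ r - algebraMap K L (algebraMap (𝓞 K) K β) = 0 := by
      simpa only [map_sub, map_pow, aeval_X, aeval_C] using hroot
    exact sub_eq_zero.mp this
  have hfin : Module.finrank K L = d * m := by
    have hxInt : IsIntegral K η := Algebra.IsIntegral.isIntegral η
    rw [← IntermediateField.finrank_top', ← hgen, IntermediateField.adjoin.finrank hxInt,
      ← minpoly.eq_of_irreducible_of_monic hirr hroot (monic_X_pow_sub_C _ hr.ne'),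
      natDegree_X_pow_sub_C, mul_comm]
    exact hrm
  let F := IntermediateField.adjoin K {η ^ m}
  let θ : F := IntermediateField.AdjoinSimple.gen K (η ^ m)
  have hθη : algebraMap F L θ = η ^ m := IntermediateField.AdjoinSimple.algebraMap_gen K (η ^ m)
  have hθ : θ ^ d = algebraMap K F (algebraMap (𝓞 K) K β) := by
    apply (algebraMap F L).injective
    rw [map_pow, hθη, ← pow_mul, ← hrm, hηr, ← IsScalarTower.algebraMap_apply K F L]
  have hgenF : IntermediateField.adjoin K {θ} = ⊤ := by
    apply IntermediateField.lift_injective F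
    rw [IntermediateField.lift_adjoin_simple, IntermediateField.lift_top]
    rfl
  have hgenL : IntermediateField.adjoin F {η} = ⊤ :=
    IntermediateField.adjoin_eq_top_of_adjoin_eq_top K hgen
  have key := main_tower (F := F) v d m a hd hm hcop.symm β hβ
    (by rw [hβv, hAa, mul_comm]) hnd η θ hθη.symm hθ hgenF hgenL hfin
  change idealVal P _ = _ * idealVal P _ + _ at key
  have hd0 : (d : 𝓞 K) ≠ 0 := by exact_mod_cast hd.ne'
  have hm0 : (m : 𝓞 K) ≠ 0 := by exact_mod_cast hm.ne'
  have hrv : idealVal P (Ideal.span {(r : 𝓞 K)}) = idealVal P (Ideal.span {(m : 𝓞 K)}) := by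
    conv_lhs => rw [hrm]
    rw [Nat.cast_mul, ← Ideal.span_singleton_mul_span_singleton,
      idealVal_mul _ _ _ (by simpa using hm0) (by simpa using hd0),
      idealVal_eq_zero P (Ideal.span {(d : 𝓞 K)}) d (Ideal.mem_span_singleton_self _) hnd, add_zero]
  rw [key, hrv, Nat.sub_mul, one_mul, ← hrm, mul_comm d m, ← hrm]
  rw [Nat.add_sub_assoc (Nat.le_of_dvd hr (Nat.gcd_dvd_left _ _))]

end RadExt

/-- (Llorente–Nart) Let `g = X^r − β` be irreducible over `K` with root `η`, `L = K(η)`.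
For every prime `P` of `𝓞 K` not dividing `gcd(r, v_P(β))`, the `P`-adic valuation of the
relative discriminant of `L|K` equals `r·v_P(r) + r − gcd(r, v_P(β))`. -/
theorem discriminant_valuation_radical_extension {K L : Type*} [Field K] [NumberField K]
    [Field L] [NumberField L] [Algebra K L]
    (r : ℕ) (hr : 0 < r) (β : 𝓞 K)
    (hirr : Irreducible (X ^ r - C (algebraMap (𝓞 K) K β) : K[X]))
    (η : L) (hroot : aeval η (X ^ r - C (algebraMap (𝓞 K) K β) : K[X]) = 0)
    (hgen : IntermediateField.adjoin K {η} = ⊤)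
    (P : Ideal (𝓞 K)) (hP : P.IsPrime) (hPne : P ≠ ⊥)
    (hnd : ((Nat.gcd r (idealVal P (Ideal.span {β})) : ℕ) : 𝓞 K) ∉ P) :
    idealVal P (Ideal.spanNorm (𝓞 K) (differentIdeal (𝓞 K) (𝓞 L))) =
      r * idealVal P (Ideal.span {(r : 𝓞 K)}) + r - Nat.gcd r (idealVal P (Ideal.span {β})) := by
  by_cases hβ : β = 0
  · subst hβ
    have hr1 : r = 1 := by
      have h : Irreducible (X ^ r : K[X]) := by simpa using hirr
      by_contra hne
      exact not_irreducible_pow hne h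
    subst hr1
    have hη : η = 0 := by simpa using hroot
    have h1 := RadExt.main_ne_zero (K := K) (L := L) 1 one_pos 1 one_ne_zero
      (by simpa using irreducible_X_sub_C (1 : K)) 1 (by simp) (by
        rw [← hgen, hη]; simp) P hP hPne (by
        simpa using (Ideal.ne_top_iff_one _).mp hP.ne_top)
    simpa using h1
  · exact RadExt.main_ne_zero r hr β hβ hirr η hroot hgen P hP hPne hnd
end

section
/- For every number field K there exists a finite extension L of K such that the ring of integers O_L is generated as a ring by its group of units O_L^×. -/
open NumberField


theorem ideal_count_le (F : Type) [Field F] [NumberField F] :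
    ∃ c Z₀ : ℕ, ∀ Z : ℕ, Z₀ ≤ Z →
      Nat.card {I : Ideal (𝓞 F) // Ideal.absNorm I ≤ Z} ≤ c * Z := by
  have h := (NumberField.Ideal.tendsto_norm_le_div_atTop F).comp tendsto_natCast_atTop_atTop
    (α := ℕ)
  obtain ⟨c, hc⟩ := exists_nat_gt ((2 ^ InfinitePlace.nrRealPlaces F *
    (2 * Real.pi) ^ InfinitePlace.nrComplexPlaces F * Units.regulator F * classNumber F) /
        (Units.torsionOrder F * Real.sqrt |discr F|))
  have h2 := h.eventually (eventually_lt_nhds hc)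
  obtain ⟨Z₀, hZ⟩ := Filter.eventually_atTop.1 h2
  refine ⟨c, Z₀ + 1, fun Z hZ' => ?_⟩
  have h3 := hZ Z (by omega)
  have hpos : (0 : ℝ) < Z := by exact_mod_cast (by omega : 0 < Z)
  simp only [Function.comp_apply, Nat.cast_le] at h3
  rw [div_lt_iff₀ hpos] at h3
  exact_mod_cast h3.le

theorem summable_absNorm (F : Type) [Field F] [NumberField F] :
    Summable (fun I : Ideal (𝓞 F) => 1 / (Ideal.absNorm I : ℝ) ^ 2) := by
  obtain ⟨c, Z₀, hc⟩ := ideal_count_le F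
  let f : ℕ → ℝ := fun n => Nat.card {I : Ideal (𝓞 F) // Ideal.absNorm I = n}
  have hfin : ∀ n : ℕ, Finite {I : Ideal (𝓞 F) // Ideal.absNorm I = n} := fun n =>
    (Ideal.finite_setOfPred_absNorm_eq n)
  have hO : (fun n ↦ ∑ k ∈ Finset.Icc 1 n, f k) =O[Filter.atTop] fun n ↦ (n : ℝ) ^ (1 : ℝ) := by
    apply Asymptotics.IsBigO.of_bound c
    filter_upwards [Filter.eventually_ge_atTop Z₀] with n hn
    have h1 := hc n hn
    rw [Real.rpow_one, Real.norm_of_nonneg (Finset.sum_nonneg fun _ _ => Nat.cast_nonneg _),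
      Real.norm_natCast]
    have h2 : ∑ k ∈ Finset.Icc 0 n, Nat.card {I : Ideal (𝓞 F) // Ideal.absNorm I = k} =
        Nat.card {I : Ideal (𝓞 F) // Ideal.absNorm I ≤ n} := by
      have := Finset.card_preimage_eq_sum_card_image_eq (f := fun I : Ideal (𝓞 F) => Ideal.absNorm I)
        (s := Finset.Icc 0 n) (fun k _ ↦ Ideal.finite_setOfPred_absNorm_eq k)
      rw [← this]
      simp [Set.coe_eq_subtype]
    have h3 : ∑ k ∈ Finset.Icc 1 n, Nat.card {I : Ideal (𝓞 F) // Ideal.absNorm I = k} ≤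
       ∑ k ∈ Finset.Icc 0 n, Nat.card {I : Ideal (𝓞 F) // Ideal.absNorm I = k} :=
      Finset.sum_le_sum_of_subset (Finset.Icc_subset_Icc_left (by omega))
    have h4 := (h3.trans h2.le).trans h1
    show ∑ k ∈ Finset.Icc 1 n, (Nat.card {I : Ideal (𝓞 F) // Ideal.absNorm I = k} : ℝ) ≤ _
    exact_mod_cast h4
  have hL := LSeriesSummable_of_sum_norm_bigO_and_nonneg (s := 2) hO
    (fun n => Nat.cast_nonneg _) zero_le_one (by norm_num)
  have hS : Summable (fun n : ℕ => f n / (n : ℝ) ^ 2) := by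
    have := hL.norm
    refine this.congr fun n => ?_
    rw [LSeries.norm_term_eq]
    by_cases hn : n = 0
    · simp [hn]
    · simp [hn, f]
  rw [← (Equiv.sigmaFiberEquiv (fun I : Ideal (𝓞 F) => Ideal.absNorm I)).summable_iff]
  rw [summable_sigma_of_nonneg (fun x => by simp only [Function.comp]; positivity)]
  refine ⟨fun n => Summable.of_finite, ?_⟩
  refine hS.congr fun n => ?_
  have : ∀ y : {I : Ideal (𝓞 F) // Ideal.absNorm I = n},
    ((fun I : Ideal (𝓞 F) => 1 / (Ideal.absNorm I : ℝ) ^ 2) ∘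
      (Equiv.sigmaFiberEquiv (fun I : Ideal (𝓞 F) => Ideal.absNorm I))) ⟨n, y⟩ = 1 / (n : ℝ) ^ 2 := by
    intro y
    simp [Equiv.sigmaFiberEquiv, y.2]
  rw [tsum_congr this, tsum_const]
  simp [f, div_eq_mul_inv]

theorem exists_scale {C N n : ℕ} (hC : 1 ≤ C) (hn : 1 ≤ n) (h : C < N) :
    ∃ s : ℕ, 1 ≤ s ∧ C * s ^ n < N ∧ N ≤ C * (2 * s) ^ n := by
  classical
  have hex : ∃ t : ℕ, N ≤ C * t ^ n := ⟨N, by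
    calc N ≤ N ^ n := Nat.le_self_pow (by omega) N
      _ ≤ C * N ^ n := Nat.le_mul_of_pos_left _ hC⟩
  have h1 := Nat.find_spec hex
  have h2 : 2 ≤ Nat.find hex := by
    by_contra hlt
    have h3 : Nat.find hex ≤ 1 := by omega
    have h4 : (Nat.find hex) ^ n ≤ 1 := by
      calc _ ≤ 1 ^ n := Nat.pow_le_pow_left h3 n
        _ = 1 := one_pow n
    nlinarith
  refine ⟨Nat.find hex - 1, by omega, ?_, ?_⟩
  · have := Nat.find_min hex (m := Nat.find hex - 1) (by omega)
    omega
  · refine h1.trans (Nat.mul_le_mul_left _ (Nat.pow_le_pow_left (by omega) n))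

/-- Pigeonhole bound for the number of lattice points of a box in a coset of an ideal. -/
theorem count_coset {F : Type} [Field F] [NumberField F] {ι : Type} [Fintype ι] [DecidableEq ι]
    (b : Module.Basis ι ℤ (𝓞 F)) (C : ℕ) (hC : 1 ≤ C) (hn : 1 ≤ Fintype.card ι)
    (hnorm : ∀ (a : 𝓞 F) (y : ℕ), (∀ k, |b.repr a k| ≤ (y : ℤ)) →
      (Algebra.norm ℤ a).natAbs ≤ C * y ^ Fintype.card ι)
    (I : Ideal (𝓞 F)) (X : ℕ) (E : Finset (ι → ℕ))
    (hE : E ⊆ Fintype.piFinset (fun _ => Finset.range X))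
    (hEI : ∀ v ∈ E, ∀ w ∈ E, (∑ i, ((v i : ℤ) - (w i : ℤ)) • b i) ∈ I) :
    E.card * Ideal.absNorm I ≤ X ^ Fintype.card ι * (C * 4 ^ Fintype.card ι) + Ideal.absNorm I := by
  set n := Fintype.card ι with hndef
  set N := Ideal.absNorm I with hN
  have hcardX : E.card ≤ X ^ n := by
    refine (Finset.card_le_card hE).trans (le_of_eq ?_)
    simp [hndef]
  have h4 : 1 ≤ 4 ^ n := Nat.one_le_pow _ _ (by norm_num)
  rcases Nat.lt_or_ge C N with hlt | hle
  · obtain ⟨s, hs1, hs2, hs3⟩ := exists_scale hC hn hlt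
    have hcard : E.card ≤ (X / s + 1) ^ n := by
      have : E.card ≤ (Fintype.piFinset (fun _ : ι => Finset.range (X / s + 1))).card := by
        refine Finset.card_le_card_of_injOn (fun v i => v i / s) ?_ ?_
        · intro v hv
          have := hE hv
          simp only [Fintype.mem_piFinset, Finset.mem_range, Finset.mem_coe] at this ⊢
          intro i
          exact Nat.lt_succ_of_le (Nat.div_le_div_right (this i).le)
        · intro v hv w hw hvw
          have hI := hEI v hv w hw
          set a := ∑ i, ((v i : ℤ) - (w i : ℤ)) • b i with ha
          have hrepr : ∀ k, b.repr a k = (v k : ℤ) - (w k : ℤ) := by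
            intro k
            rw [ha, b.repr_sum_self]
          have hb : ∀ k, |b.repr a k| ≤ (s : ℤ) := by
            intro k
            rw [hrepr]
            have h1 : v k / s = w k / s := congrFun hvw k
            have h2 := Nat.div_add_mod (v k) s
            have h3 := Nat.div_add_mod (w k) s
            have h5 := Nat.mod_lt (v k) hs1
            have h6 := Nat.mod_lt (w k) hs1
            rw [h1] at h2
            rw [abs_le]
            constructor <;> omega
          have h7 := hnorm a s hb
          have h8 := Ideal.absNorm_dvd_norm_of_mem hI
          have h9 : Algebra.norm ℤ a = 0 := by
            by_contra hne
            have := Nat.le_of_dvd (Int.natAbs_pos.2 hne) (Int.natCast_dvd.1 h8)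
            omega
          have h10 : a = 0 := Algebra.norm_eq_zero_iff.1 h9
          funext k
          have := hrepr k
          rw [h10] at this
          simp at this
          omega
      refine this.trans (le_of_eq ?_)
      simp [hndef]
    rcases Nat.lt_or_ge X s with hXs | hXs
    · rw [Nat.div_eq_of_lt hXs] at hcard
      simp at hcard
      calc E.card * N ≤ 1 * N := Nat.mul_le_mul_right _ hcard
        _ = N := one_mul N
        _ ≤ _ := Nat.le_add_left _ _
    · have h11 : s * (X / s + 1) ≤ 2 * X := by
        have := Nat.mul_div_le X s
        nlinarith
      have h12 : s ^ n * E.card ≤ (2 * X) ^ n := by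
        calc s ^ n * E.card ≤ s ^ n * (X / s + 1) ^ n := Nat.mul_le_mul_left _ hcard
          _ = (s * (X / s + 1)) ^ n := (mul_pow _ _ _).symm
          _ ≤ _ := Nat.pow_le_pow_left h11 n
      calc E.card * N ≤ E.card * (C * (2 * s) ^ n) := Nat.mul_le_mul_left _ hs3
        _ = C * 2 ^ n * (s ^ n * E.card) := by rw [mul_pow]; ring
        _ ≤ C * 2 ^ n * (2 * X) ^ n := Nat.mul_le_mul_left _ h12
        _ = X ^ n * (C * 4 ^ n) := by
          rw [mul_pow, show (4 : ℕ) = 2 * 2 by norm_num, mul_pow]; ring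
        _ ≤ _ := Nat.le_add_right _ _
  · calc E.card * N ≤ X ^ n * C := Nat.mul_le_mul hcardX hle
      _ ≤ X ^ n * (C * 4 ^ n) := Nat.mul_le_mul_left _ (Nat.le_mul_of_pos_right _ h4)
      _ ≤ _ := Nat.le_add_right _ _

theorem exists_norm_bound {F : Type} [Field F] [NumberField F] {ι : Type} [Fintype ι]
    [DecidableEq ι] (b : Module.Basis ι ℤ (𝓞 F)) :
    ∃ C : ℕ, 1 ≤ C ∧ ∀ (a : 𝓞 F) (y : ℕ), (∀ k, |b.repr a k| ≤ (y : ℤ)) →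
      (Algebra.norm ℤ a).natAbs ≤ C * y ^ Fintype.card ι := by
  have hp := ClassGroup.normBound_pos AbsoluteValue.abs b
  refine ⟨(ClassGroup.normBound AbsoluteValue.abs b).toNat, by omega, fun a y hy => ?_⟩
  have := ClassGroup.norm_le AbsoluteValue.abs b a (y := y) hy
  zify
  rw [Int.toNat_of_nonneg hp.le]
  exact this

/-- choice of an auxiliary integer -/
theorem exists_aux_int (d P₀ : ℕ) (hd : d ≠ 0) (hP : P₀ ≠ 0) :
    ∃ P m : ℕ, P ≠ 0 ∧ P ∣ m ∧ (d : ℤ) ∣ (m : ℤ) - 1 ∧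
      ∀ p : ℕ, p.Prime → p ∣ P₀ → p ∣ d ∨ p ∣ P := by
  classical
  set P := ∏ p ∈ P₀.primeFactors.filter (fun p => ¬ p ∣ d), p with hPdef
  have hcop : Nat.Coprime P d := by
    refine Nat.Coprime.prod_left fun p hp => ?_
    rw [Finset.mem_filter] at hp
    exact ((Nat.prime_of_mem_primeFactors hp.1).coprime_iff_not_dvd).2 hp.2
  refine ⟨P, P ^ d.totient, ?_, dvd_pow_self _ (Nat.totient_pos.2 (by omega)).ne', ?_, ?_⟩
  · refine Finset.prod_ne_zero_iff.2 fun p hp => ?_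
    rw [Finset.mem_filter] at hp
    exact (Nat.prime_of_mem_primeFactors hp.1).ne_zero
  · have := Nat.ModEq.pow_totient hcop
    exact (Nat.modEq_iff_dvd.1 this.symm)
  · intro p hp hpP
    by_cases h : p ∣ d
    · exact Or.inl h
    · right
      refine Finset.dvd_prod_of_mem _ ?_
      rw [Finset.mem_filter]
      exact ⟨Nat.mem_primeFactors.2 ⟨hp, hpP, hP⟩, h⟩

theorem two_not_unit (F : Type) [Field F] [NumberField F] : ¬ IsUnit (2 : 𝓞 F) := by
  intro h
  have h1 := h.map (Algebra.norm ℤ)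
  have h2 : Algebra.norm ℤ (2 : 𝓞 F) = 2 ^ Module.finrank ℤ (𝓞 F) := by
    have := Algebra.norm_algebraMap (S := 𝓞 F) (2 : ℤ)
    simpa using this
  rw [h2] at h1
  have h3 : Module.finrank ℤ (𝓞 F) ≠ 0 := by
    rw [RingOfIntegers.rank]
    exact Module.finrank_pos.ne'
  rw [isUnit_pow_iff h3] at h1
  exact absurd (Int.isUnit_iff.1 h1) (by norm_num)

/-- if `P₀` lies in the prime `q` then a rational prime factor of it does -/
theorem exists_prime_mem {R : Type} [CommRing R] (q : Ideal R) [hq : q.IsPrime] (P₀ : ℕ)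
    (hP : P₀ ≠ 0) (h : (P₀ : R) ∈ q) : ∃ p : ℕ, p.Prime ∧ p ∣ P₀ ∧ (p : R) ∈ q := by
  induction P₀ using Nat.recOnMul with
  | zero => exact absurd rfl hP
  | one => exact absurd (by simpa using h) ((Ideal.ne_top_iff_one q).1 hq.ne_top)
  | prime p hp => exact ⟨p, hp, dvd_rfl, h⟩
  | mul a c iha ihc =>
    push_cast at h
    rcases hq.mem_or_mem h with h | h
    · obtain ⟨p, h1, h2, h3⟩ := iha (by rintro rfl; simp at hP) h
      exact ⟨p, h1, h2.mul_right _, h3⟩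
    · obtain ⟨p, h1, h2, h3⟩ := ihc (by rintro rfl; simp at hP) h
      exact ⟨p, h1, h2.mul_left _, h3⟩

theorem sieve (F : Type) [Field F] [NumberField F] (d : ℕ) (hd : d ≠ 0) (hd2 : 2 ∣ d)
    (x : 𝓞 F) (hx : IsCoprime (x ^ 2 - 4) (d : 𝓞 F)) :
    ∃ β : 𝓞 F, ∀ q : Ideal (𝓞 F), q.IsPrime → q ≠ ⊥ → (x + d * β) ^ 2 - 4 ∉ q ^ 2 := by
  classical
  let ι := Module.Free.ChooseBasisIndex ℤ (𝓞 F)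
  let b : Module.Basis ι ℤ (𝓞 F) := RingOfIntegers.basis F
  obtain ⟨C, hC, hnorm⟩ := exists_norm_bound b
  set n := Fintype.card ι with hndef
  have hn : 1 ≤ n := Fintype.card_pos_iff.2 b.index_nonempty
  obtain ⟨c, Z₀, hcount⟩ := ideal_count_le F
  set C' : ℕ := C * 4 ^ n with hC'
  have hC'pos : 0 < C' := by positivity
  have hC'R : (0 : ℝ) < C' := by exact_mod_cast hC'pos
  obtain ⟨T, hT⟩ := summable_iff_vanishing_norm.1 (summable_absNorm F) (1 / (8 * C')) (by positivity)
  set P₀ : ℕ := ∏ I ∈ T.filter (fun I => I ≠ ⊥), Ideal.absNorm I with hP₀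
  have hP₀0 : P₀ ≠ 0 := by
    refine Finset.prod_ne_zero_iff.2 fun I hI => ?_
    rw [Finset.mem_filter] at hI
    exact fun h => hI.2 (Ideal.absNorm_eq_zero_iff.1 h)
  obtain ⟨P, m, hP0, ⟨m', hm'⟩, ⟨k, hk⟩, hpP⟩ := exists_aux_int d P₀ hd hP₀0
  set M : ℕ := d * P with hM
  have hM0 : M ≠ 0 := mul_ne_zero hd hP0
  -- primes of `T` contain `M`
  have hTM : ∀ q : Ideal (𝓞 F), q.IsPrime → q ≠ ⊥ → q ∈ T → (M : 𝓞 F) ∈ q := by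
    intro q hq hqb hqT
    have h1 : (P₀ : 𝓞 F) ∈ q := by
      have h2 : Ideal.absNorm q ∣ P₀ :=
        Finset.dvd_prod_of_mem _ (Finset.mem_filter.2 ⟨hqT, hqb⟩)
      obtain ⟨r, hr⟩ := h2
      rw [hr]
      push_cast
      exact Ideal.mul_mem_right _ _ (Ideal.absNorm_mem q)
    obtain ⟨p, hp, hpd, hpq⟩ := exists_prime_mem q P₀ hP₀0 h1
    have h3 : p ∣ M := by
      rcases hpP p hp hpd with h | h
      · exact h.mul_right _
      · exact h.mul_left _
    obtain ⟨r, hr⟩ := h3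
    rw [hr]
    push_cast
    exact Ideal.mul_mem_right _ _ hpq
  let el : (ι → ℕ) → 𝓞 F := fun v => ∑ i, (v i : ℤ) • b i
  let al : (ι → ℕ) → 𝓞 F := fun v => m * x + M * el v
  have hal : ∀ v, al v = x + d * (k * x + P * el v) := by
    intro v
    have : (m : 𝓞 F) - 1 = d * k := by exact_mod_cast congrArg (Int.cast : ℤ → 𝓞 F) hk
    simp only [al, hM]
    push_cast
    linear_combination x * this
  have h2d : ∀ q : Ideal (𝓞 F), (2 : 𝓞 F) ∈ q → (d : 𝓞 F) ∈ q := by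
    intro q h
    obtain ⟨r, hr⟩ := hd2
    rw [hr]
    push_cast
    exact Ideal.mul_mem_right _ _ h
  have hfact1d : ∀ q : Ideal (𝓞 F), q.IsPrime → (d : 𝓞 F) ∈ q → ∀ v, al v ^ 2 - 4 ∉ q := by
    intro q hq hdq v h
    have h1 : x ^ 2 - 4 ∈ q := by
      have : x ^ 2 - 4 = (al v ^ 2 - 4) - d * ((k * x + P * el v) * (2 * x + d * (k * x + P * el v))) := by
        rw [hal]; ring
      rw [this]
      exact Ideal.sub_mem _ h (Ideal.mul_mem_right _ _ hdq)
    obtain ⟨a, e, hae⟩ := hx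
    apply hq.ne_top
    rw [Ideal.eq_top_iff_one, ← hae]
    exact Ideal.add_mem _ (Ideal.mul_mem_left _ _ h1) (Ideal.mul_mem_left _ _ hdq)
  have hfour : ∀ q : Ideal (𝓞 F), q.IsPrime → (4 : 𝓞 F) ∈ q → (d : 𝓞 F) ∈ q := by
    intro q hq h
    refine h2d q ?_
    rw [show (4 : 𝓞 F) = 2 * 2 by norm_num] at h
    exact (hq.mem_or_mem h).elim id id
  have hfact1 : ∀ q : Ideal (𝓞 F), q.IsPrime → (M : 𝓞 F) ∈ q → ∀ v, al v ^ 2 - 4 ∉ q := by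
    intro q hq hMq v
    by_cases hdq : (d : 𝓞 F) ∈ q
    · exact hfact1d q hq hdq v
    · intro h
      have hPq : (P : 𝓞 F) ∈ q := by
        rw [hM] at hMq
        push_cast at hMq
        exact (hq.mem_or_mem hMq).resolve_left hdq
      have halq : al v ∈ q := by
        have : al v = P * (m' * x + d * el v) := by
          simp only [al, hM, hm']; push_cast; ring
        rw [this]
        exact Ideal.mul_mem_right _ _ hPq
      apply hdq
      apply hfour q hq
      have : (4 : 𝓞 F) = al v * al v - (al v ^ 2 - 4) := by ring
      rw [this]
      exact Ideal.sub_mem _ (Ideal.mul_mem_right _ _ halq) h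
  have hne : ∀ v, al v ^ 2 - 4 ≠ 0 := by
    intro v h
    obtain ⟨q, hq, hle⟩ := Ideal.exists_le_maximal (Ideal.span {(2 : 𝓞 F)})
      (fun h => two_not_unit F (Ideal.span_singleton_eq_top.1 h))
    refine hfact1d q hq.isPrime (h2d q (hle (Ideal.mem_span_singleton_self _))) v ?_
    rw [h]
    exact Ideal.zero_mem _
  by_contra hcon
  push Not at hcon
  have hbad : ∀ v, ∃ q : Ideal (𝓞 F), q.IsPrime ∧ q ≠ ⊥ ∧ (M : 𝓞 F) ∉ q ∧
      (al v - 2 ∈ q ^ 2 ∨ al v + 2 ∈ q ^ 2) := by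
    intro v
    obtain ⟨q, hq, hqb, hmem⟩ := hcon (k * x + P * el v)
    rw [← hal] at hmem
    have hMq : (M : 𝓞 F) ∉ q := fun h => hfact1 q hq h v (Ideal.pow_le_self two_ne_zero hmem)
    refine ⟨q, hq, hqb, hMq, ?_⟩
    rw [show al v ^ 2 - 4 = (al v - 2) * (al v + 2) by ring] at hmem
    by_cases h1 : al v - 2 ∈ q
    · have h2 : al v + 2 ∉ q := by
        intro h2
        apply hMq
        have h3 : (4 : 𝓞 F) ∈ q := by
          rw [show (4 : 𝓞 F) = (al v + 2) - (al v - 2) by ring]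
          exact Ideal.sub_mem _ h2 h1
        rw [hM]
        push_cast
        exact Ideal.mul_mem_right _ _ (hfour q hq h3)
      rw [mul_comm] at hmem
      exact Or.inl ((Ideal.IsPrime.mul_mem_pow q hmem).resolve_left h2)
    · exact Or.inr ((Ideal.IsPrime.mul_mem_pow q hmem).resolve_left h1)
  -- bounds
  obtain ⟨A, hA1, hA⟩ : ∃ A : ℕ, 1 ≤ A ∧ ∀ X : ℕ, 1 ≤ X →
      ∀ v ∈ Fintype.piFinset (fun _ : ι => Finset.range X), ∀ i,
        |b.repr (al v - 2) i| ≤ ((A * X : ℕ) : ℤ) ∧ |b.repr (al v + 2) i| ≤ ((A * X : ℕ) : ℤ) := by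
    refine ⟨1 + M + ∑ i, ((b.repr (m * x - 2) i).natAbs + (b.repr (m * x + 2) i).natAbs),
      by omega, ?_⟩
    intro X hX v hv i
    rw [Fintype.mem_piFinset] at hv
    have hvi := Finset.mem_range.1 (hv i)
    set S := ∑ i, ((b.repr (m * x - 2) i).natAbs + (b.repr (m * x + 2) i).natAbs) with hS
    have hSi : (b.repr (m * x - 2) i).natAbs + (b.repr (m * x + 2) i).natAbs ≤ S :=
      Finset.single_le_sum (f := fun i => (b.repr (m * x - 2) i).natAbs + (b.repr (m * x + 2) i).natAbs)
        (fun _ _ => Nat.zero_le _) (Finset.mem_univ i)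
    have hel : b.repr ((M : 𝓞 F) * el v) i = M * v i := by
      have : (M : 𝓞 F) * el v = (M : ℤ) • el v := by simp
      rw [this, map_smul, Finsupp.smul_apply]
      simp only [el]
      rw [b.repr_sum_self]
      simp
    have e1 : b.repr (al v - 2) i = b.repr (m * x - 2) i + M * v i := by
      rw [← hel, ← Finsupp.add_apply, ← map_add]
      congr 2
      simp only [al]; ring
    have e2 : b.repr (al v + 2) i = b.repr (m * x + 2) i + M * v i := by
      rw [← hel, ← Finsupp.add_apply, ← map_add]
      congr 2
      simp only [al]; ring
    have hMv : (M : ℤ) * v i ≤ M * X := by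
      have : M * v i ≤ M * X := Nat.mul_le_mul_left _ hvi.le
      exact_mod_cast this
    have hMv0 : (0 : ℤ) ≤ (M : ℤ) * v i := by positivity
    have hSX : (S : ℤ) ≤ S * X := by
      have : S ≤ S * X := Nat.le_mul_of_pos_right _ hX
      exact_mod_cast this
    have hX0 : (0 : ℤ) ≤ X := by positivity
    have hAX : (((1 + M + S) * X : ℕ) : ℤ) = X + M * X + S * X := by push_cast; ring
    rw [e1, e2, hAX, abs_le, abs_le]
    refine ⟨⟨?_, ?_⟩, ⟨?_, ?_⟩⟩ <;> omega
  set W : ℕ := 4 * c * C * A ^ n + Z₀ + 1 with hW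
  set X : ℕ := W ^ 2 with hX
  have hW1 : 1 ≤ W := by omega
  have hX1 : 1 ≤ X := Nat.one_le_pow _ _ hW1
  have hAn : 1 ≤ A ^ n := Nat.one_le_pow _ _ hA1
  have hWn : W ≤ W ^ n := Nat.le_self_pow (by omega) W
  set Z : ℕ := C * A ^ n * W ^ n with hZ
  have hCA : 1 ≤ C * A ^ n := Nat.mul_pos hC hAn
  have hZZ₀ : Z₀ ≤ Z := by
    calc Z₀ ≤ W := by omega
      _ ≤ W ^ n := hWn
      _ ≤ Z := Nat.le_mul_of_pos_left _ hCA
  set box := Fintype.piFinset (fun _ : ι => Finset.range X) with hbox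
  have hboxcard : box.card = X ^ n := by simp [hbox, hndef]
  have hfinZ : {I : Ideal (𝓞 F) | Ideal.absNorm I ≤ Z}.Finite := Ideal.finite_setOfPred_absNorm_le Z
  set Q : Finset (Ideal (𝓞 F)) := hfinZ.toFinset.filter
    (fun q => q.IsPrime ∧ q ≠ ⊥ ∧ (M : 𝓞 F) ∉ q) with hQ
  have hQcard : Q.card ≤ c * Z := by
    refine le_trans ?_ (hcount Z hZZ₀)
    refine (Finset.card_le_card (Finset.filter_subset _ _)).trans (le_of_eq ?_)
    rw [← Nat.card_eq_card_finite_toFinset hfinZ]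
    rfl
  have hnormle : ∀ a : 𝓞 F, a ≠ 0 → (∀ i, |b.repr a i| ≤ ((A * X : ℕ) : ℤ)) → ∀ q : Ideal (𝓞 F),
      a ∈ q ^ 2 → Ideal.absNorm q ≤ Z := by
    intro a ha hai q haq
    have h1 := hnorm a _ hai
    have h2 := Ideal.absNorm_dvd_norm_of_mem haq
    have h3 := Nat.le_of_dvd (Int.natAbs_pos.2 (fun h => ha (Algebra.norm_eq_zero_iff.1 h)))
      (Int.natCast_dvd.1 h2)
    rw [map_pow] at h3
    have h4 : Ideal.absNorm q ^ 2 ≤ Z ^ 2 := by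
      calc _ ≤ C * (A * X) ^ n := h3.trans h1
        _ = (C * A ^ n) * (W ^ n) ^ 2 := by rw [hX]; ring
        _ ≤ (C * A ^ n) ^ 2 * (W ^ n) ^ 2 :=
          Nat.mul_le_mul_right _ (Nat.le_self_pow two_ne_zero _)
        _ = Z ^ 2 := by rw [hZ]; ring
    exact (Nat.pow_le_pow_iff_left two_ne_zero).1 h4
  let E₁ : Ideal (𝓞 F) → Finset (ι → ℕ) := fun q => box.filter (fun v => al v - 2 ∈ q ^ 2)
  let E₂ : Ideal (𝓞 F) → Finset (ι → ℕ) := fun q => box.filter (fun v => al v + 2 ∈ q ^ 2)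
  have hcover : box ⊆ Q.biUnion (fun q => E₁ q ∪ E₂ q) := by
    intro v hv
    obtain ⟨q, hq, hqb, hMq, hmem⟩ := hbad v
    rw [Finset.mem_biUnion]
    refine ⟨q, ?_, ?_⟩
    · rw [hQ, Finset.mem_filter, Set.Finite.mem_toFinset]
      refine ⟨?_, hq, hqb, hMq⟩
      have hne' := hne v
      rw [show al v ^ 2 - 4 = (al v - 2) * (al v + 2) by ring] at hne'
      rcases hmem with h | h
      · exact hnormle _ (left_ne_zero_of_mul hne') (fun i => (hA X hX1 v hv i).1) q h
      · exact hnormle _ (right_ne_zero_of_mul hne') (fun i => (hA X hX1 v hv i).2) q h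
    · rw [Finset.mem_union, Finset.mem_filter, Finset.mem_filter]
      exact hmem.imp (fun h => ⟨hv, h⟩) (fun h => ⟨hv, h⟩)
  have hcancel : ∀ q : Ideal (𝓞 F), q.IsPrime → (M : 𝓞 F) ∉ q → ∀ v w : ι → ℕ,
      al v - al w ∈ q ^ 2 → (∑ i, ((v i : ℤ) - (w i : ℤ)) • b i) ∈ q ^ 2 := by
    intro q hq hMq v w h
    have h1 : al v - al w = M * (∑ i, ((v i : ℤ) - (w i : ℤ)) • b i) := by
      simp only [al, el, sub_smul, Finset.sum_sub_distrib]; ring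
    rw [h1] at h
    exact (Ideal.IsPrime.mul_mem_pow q h).resolve_left hMq
  have hEcard : ∀ q ∈ Q, ((E₁ q ∪ E₂ q).card : ℝ) ≤
      2 * ((X : ℝ) ^ n * C' * (1 / (Ideal.absNorm q : ℝ) ^ 2) + 1) := by
    intro q hqQ
    rw [hQ, Finset.mem_filter] at hqQ
    obtain ⟨-, hq, hqb, hMq⟩ := hqQ
    have hN0 : (0 : ℝ) < (Ideal.absNorm q : ℝ) ^ 2 := by
      have : Ideal.absNorm q ≠ 0 := fun h => hqb (Ideal.absNorm_eq_zero_iff.1 h)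
      positivity
    have key : ∀ E : Finset (ι → ℕ), E ⊆ box →
        (∀ v ∈ E, ∀ w ∈ E, al v - al w ∈ q ^ 2) →
        (E.card : ℝ) ≤ (X : ℝ) ^ n * C' * (1 / (Ideal.absNorm q : ℝ) ^ 2) + 1 := by
      intro E hE hE2
      have h1 := count_coset b C hC hn hnorm (q ^ 2) X E hE
        (fun v hv w hw => hcancel q hq hMq v w (hE2 v hv w hw))
      rw [map_pow] at h1
      have h2 : (E.card : ℝ) * (Ideal.absNorm q : ℝ) ^ 2 ≤ (X : ℝ) ^ n * C' +
        (Ideal.absNorm q : ℝ) ^ 2 := by exact_mod_cast h1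
      rw [← le_div_iff₀ hN0] at h2
      refine h2.trans (le_of_eq ?_)
      rw [add_div, div_self hN0.ne']
      ring
    have k1 := key (E₁ q) (Finset.filter_subset _ _) (by
      intro v hv w hw
      rw [show al v - al w = (al v - 2) - (al w - 2) by ring]
      exact Ideal.sub_mem _ (Finset.mem_filter.1 hv).2 (Finset.mem_filter.1 hw).2)
    have k2 := key (E₂ q) (Finset.filter_subset _ _) (by
      intro v hv w hw
      rw [show al v - al w = (al v + 2) - (al w + 2) by ring]
      exact Ideal.sub_mem _ (Finset.mem_filter.1 hv).2 (Finset.mem_filter.1 hw).2)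
    have k3 : ((E₁ q ∪ E₂ q).card : ℝ) ≤ (E₁ q).card + (E₂ q).card := by
      exact_mod_cast Finset.card_union_le _ _
    linarith
  have hdisj : Disjoint Q T := by
    rw [Finset.disjoint_left]
    intro q hqQ hqT
    rw [hQ, Finset.mem_filter] at hqQ
    exact hqQ.2.2.2 (hTM q hqQ.2.1 hqQ.2.2.1 hqT)
  have hsum : ∑ q ∈ Q, 1 / (Ideal.absNorm q : ℝ) ^ 2 ≤ 1 / (8 * (C' : ℝ)) :=
    (le_abs_self _).trans (hT Q hdisj).le
  have htot : (X : ℝ) ^ n ≤ 2 * ((X : ℝ) ^ n * C' * (1 / (8 * (C' : ℝ)))) + 2 * (c * Z : ℕ) := by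
    calc (X : ℝ) ^ n = (box.card : ℝ) := by rw [hboxcard]; push_cast; rfl
      _ ≤ ((Q.biUnion (fun q => E₁ q ∪ E₂ q)).card : ℝ) := by
        exact_mod_cast Finset.card_le_card hcover
      _ ≤ ∑ q ∈ Q, ((E₁ q ∪ E₂ q).card : ℝ) := by exact_mod_cast Finset.card_biUnion_le
      _ ≤ ∑ q ∈ Q, 2 * ((X : ℝ) ^ n * C' * (1 / (Ideal.absNorm q : ℝ) ^ 2) + 1) :=
        Finset.sum_le_sum hEcard
      _ = 2 * ((X : ℝ) ^ n * C' * ∑ q ∈ Q, (1 / (Ideal.absNorm q : ℝ) ^ 2)) + 2 * Q.card := by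
        rw [← Finset.mul_sum, Finset.sum_add_distrib, ← Finset.mul_sum]
        simp; ring
      _ ≤ _ := by
        have : (Q.card : ℝ) ≤ (c * Z : ℕ) := by exact_mod_cast hQcard
        gcongr
  have h8 : (X : ℝ) ^ n * C' * (1 / (8 * (C' : ℝ))) = (X : ℝ) ^ n / 8 := by field_simp
  rw [h8] at htot
  have h9 : (X : ℝ) ^ n ≤ 4 * (c * Z : ℕ) := by
    have : (0 : ℝ) ≤ (c * Z : ℕ) := by positivity
    linarith
  have h10 : X ^ n ≤ 4 * (c * Z) := by exact_mod_cast h9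
  have h11 : 4 * (c * Z) < X ^ n := by
    calc 4 * (c * Z) = (4 * c * C * A ^ n) * W ^ n := by rw [hZ]; ring
      _ < W * W ^ n := Nat.mul_lt_mul_of_pos_right (by omega) (Nat.pow_pos hW1)
      _ ≤ W ^ n * W ^ n := Nat.mul_le_mul_right _ hWn
      _ = X ^ n := by rw [hX]; ring
  omega

theorem quad_ext (F : Type) [Field F] [NumberField F] (α : F) :
    ∃ (L : Type) (_ : Field L) (_ : NumberField L) (f : F →+* L) (u : L),
      u ^ 2 - f α * u + 1 = 0 ∧
      ∀ z : L, IsIntegral ℤ z → ∃ a b : F, z = f a + f b * u ∧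
        IsIntegral ℤ (b ^ 2 * (α ^ 2 - 4)) := by
  classical
  by_cases hroot : ∃ u : F, u ^ 2 - α * u + 1 = 0
  · obtain ⟨u, hu⟩ := hroot
    refine ⟨F, inferInstance, inferInstance, RingHom.id F, u, hu, fun z _ => ⟨z, 0, by simp, ?_⟩⟩
    simpa using isIntegral_zero
  · push Not at hroot
    let g : Polynomial F := Polynomial.X ^ 2 - Polynomial.C α * Polynomial.X + 1
    have hgdeg : g.natDegree = 2 := by
      simp only [g]; compute_degree!
    have hgmonic : g.Monic := by
      simp only [g]; monicity!
    have hirr : Irreducible g := by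
      rw [Polynomial.irreducible_iff_roots_eq_zero_of_degree_le_three (by omega) (by omega)]
      rw [Multiset.eq_zero_iff_forall_notMem]
      intro u hu
      rw [Polynomial.mem_roots hgmonic.ne_zero] at hu
      apply hroot u
      simpa [g] using hu
    have : Fact (Irreducible g) := ⟨hirr⟩
    have : Module.Finite F (AdjoinRoot g) := hgmonic.finite_adjoinRoot
    have : NumberField (AdjoinRoot g) := NumberField.of_module_finite F (AdjoinRoot g)
    let f : F →+* AdjoinRoot g := algebraMap F (AdjoinRoot g)
    let u : AdjoinRoot g := AdjoinRoot.root g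
    have hu : u ^ 2 - f α * u + 1 = 0 := by
      have := AdjoinRoot.eval₂_root g
      simp only [g, Polynomial.eval₂_add, Polynomial.eval₂_sub, Polynomial.eval₂_mul,
          Polynomial.eval₂_pow, Polynomial.eval₂_X, Polynomial.eval₂_C, Polynomial.eval₂_one] at this
      exact this
    have hu0 : u ≠ 0 := by
      intro h
      rw [h] at hu
      simp at hu
    have hv : (f α - u) ^ 2 - f α * (f α - u) + 1 = 0 := by
      linear_combination hu
    let σ : AdjoinRoot g →ₐ[F] AdjoinRoot g :=
      AdjoinRoot.liftAlgHom g (Algebra.ofId F _) (f α - u) (by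
        simp only [g, Polynomial.eval₂_add, Polynomial.eval₂_sub, Polynomial.eval₂_mul,
          Polynomial.eval₂_pow, Polynomial.eval₂_X, Polynomial.eval₂_C, Polynomial.eval₂_one]
        exact hv)
    have hσu : σ u = f α - u := by
      simp [σ, u]
    have hσf : ∀ a, σ (f a) = f a := fun a => σ.commutes a
    refine ⟨AdjoinRoot g, inferInstance, inferInstance, f, u, hu, fun z hz => ?_⟩
    obtain ⟨a, b, hab⟩ : ∃ a b : F, z = f a + f b * u := by
      obtain ⟨p, hp⟩ := AdjoinRoot.mk_surjective z
      have h1 : (p %ₘ g).natDegree ≤ 1 := by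
        have := Polynomial.natDegree_modByMonic_lt p hgmonic (by
          intro h; rw [h] at hgdeg; simp at hgdeg)
        omega
      have h2 : z = AdjoinRoot.mk g (p %ₘ g) := by
        rw [← hp, AdjoinRoot.mk_eq_mk]
        rw [Polynomial.modByMonic_eq_sub_mul_div p g]
        exact ⟨p /ₘ g, by ring⟩
      rw [Polynomial.eq_X_add_C_of_natDegree_le_one h1] at h2
      refine ⟨(p %ₘ g).coeff 0, (p %ₘ g).coeff 1, ?_⟩
      rw [h2]
      simp [f, u, AdjoinRoot.algebraMap_eq]
      ring
    refine ⟨a, b, hab, ?_⟩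
    have h1 : IsIntegral ℤ (σ z) := hz.map σ.toRingHom.toIntAlgHom
    have h2 : IsIntegral ℤ ((z - σ z) ^ 2) := (hz.sub h1).pow 2
    have h3 : (z - σ z) ^ 2 = f (b ^ 2 * (α ^ 2 - 4)) := by
      rw [hab, map_add, map_mul, hσu, hσf, hσf]
      simp only [map_mul, map_pow, map_sub, map_ofNat]
      linear_combination 4 * (f b) ^ 2 * hu
    rw [h3] at h2
    exact (isIntegral_algHom_iff (f.toIntAlgHom) f.injective).1 h2

theorem integral_of_sq_mul (F : Type) [Field F] [NumberField F] (D : 𝓞 F)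
    (hD : ∀ q : Ideal (𝓞 F), q.IsPrime → q ≠ ⊥ → D ∉ q ^ 2) (b : F)
    (hb : IsIntegral ℤ (b ^ 2 * (D : F))) : IsIntegral ℤ b := by
  obtain ⟨y, hy⟩ : b ∈ (algebraMap (𝓞 F) F).range := by
    refine IsDedekindDomain.HeightOneSpectrum.mem_integers_of_valuation_le_one F b fun v => ?_
    by_contra hlt
    rw [not_le] at hlt
    obtain ⟨c, hc⟩ : ∃ c : 𝓞 F, (c : F) = b ^ 2 * D := ⟨⟨_, hb⟩, rfl⟩
    have h1 := v.valuation_le_one (K := F) c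
    change v.valuation F (c : F) ≤ 1 at h1
    rw [hc, map_mul, map_pow] at h1
    have hDv : ¬ v.intValuation D ≤ WithZero.exp (-((2 : ℕ) : ℤ)) := by
      rw [v.intValuation_le_pow_iff_mem]
      exact hD _ v.isPrime v.ne_bot
    apply hDv
    rw [← v.valuation_of_algebraMap (K := F)]
    set B := v.valuation F b with hB
    have hB0 : B ≠ 0 := fun h => by simp [h] at hlt
    have hB1 : WithZero.exp (1 : ℤ) ≤ B := by
      rw [← WithZero.exp_log hB0, WithZero.exp_le_exp]
      rw [← WithZero.exp_log hB0, ← WithZero.exp_zero, WithZero.exp_lt_exp] at hlt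
      omega
    have hB2 : WithZero.exp (2 : ℤ) ≤ B ^ 2 := by
      calc WithZero.exp (2 : ℤ) = WithZero.exp (1 : ℤ) ^ 2 := by
            rw [← WithZero.exp_nsmul]; rfl
        _ ≤ B ^ 2 := pow_le_pow_left₀ zero_le hB1 2
    have h3 : WithZero.exp (2 : ℤ) * v.valuation F (algebraMap (𝓞 F) F D) ≤ 1 :=
      (mul_le_mul_left hB2 _).trans h1
    have h4 : WithZero.exp (-((2 : ℕ) : ℤ)) * (WithZero.exp (2 : ℤ) *
      v.valuation F (algebraMap (𝓞 F) F D)) ≤ WithZero.exp (-((2 : ℕ) : ℤ)) * 1 :=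
        mul_le_mul_right h3 _
    rw [← mul_assoc, ← WithZero.exp_add] at h4
    simpa using h4
  rw [← hy]
  exact y.2

theorem co_add {F : Type} [Field F] (a b : 𝓞 F) : ((a + b : 𝓞 F) : F) = (a : F) + b :=
  map_add (algebraMap (𝓞 F) F) a b

theorem co_sub {F : Type} [Field F] (a b : 𝓞 F) : ((a - b : 𝓞 F) : F) = (a : F) - b :=
  map_sub (algebraMap (𝓞 F) F) a b

theorem co_neg {F : Type} [Field F] (a : 𝓞 F) : ((-a : 𝓞 F) : F) = -(a : F) :=
  map_neg (algebraMap (𝓞 F) F) a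

theorem co_mul {F : Type} [Field F] (a b : 𝓞 F) : ((a * b : 𝓞 F) : F) = (a : F) * b :=
  map_mul (algebraMap (𝓞 F) F) a b

theorem co_pow {F : Type} [Field F] (a : 𝓞 F) (n : ℕ) : ((a ^ n : 𝓞 F) : F) = (a : F) ^ n :=
  map_pow (algebraMap (𝓞 F) F) a n

theorem co_nat {F : Type} [Field F] (n : ℕ) : ((n : 𝓞 F) : F) = n :=
  map_natCast (algebraMap (𝓞 F) F) n

theorem co_int {F : Type} [Field F] (n : ℤ) : ((n : 𝓞 F) : F) = n :=
  map_intCast (algebraMap (𝓞 F) F) n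

theorem co_four {F : Type} [Field F] : ((4 : 𝓞 F) : F) = 4 :=
  map_ofNat (algebraMap (𝓞 F) F) 4

/-- The subring generated by the units. -/
abbrev unitRing (R : Type) [CommRing R] : Subring R := Subring.closure {x : R | IsUnit x}

theorem unitRing_of_isUnit {R : Type} [CommRing R] {u : R} (h : IsUnit u) : u ∈ unitRing R :=
  Subring.subset_closure h

theorem map_unitRing {R S : Type} [CommRing R] [CommRing S] (f : R →+* S) {x : R}
    (hx : x ∈ unitRing R) : f x ∈ unitRing S := by
  have : unitRing R ≤ (unitRing S).comap f := by
    rw [Subring.closure_le]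
    intro y hy
    exact unitRing_of_isUnit (IsUnit.map f hy)
  exact this hx

/-- a root of `X ^ 2 - α X + 1` as a unit of the ring of integers -/
theorem quad_unit {F L : Type} [Field F] [NumberField F] [Field L] [NumberField L]
    (f : F →+* L) (α : 𝓞 F) (u : L) (hu : u ^ 2 - f α * u + 1 = 0) :
    ∃ w : 𝓞 L, (w : L) = u ∧ IsUnit w ∧ RingOfIntegers.mapRingHom f α ∈ unitRing (𝓞 L) := by
  have hfα : IsIntegral ℤ (f α) := (RingOfIntegers.mapRingHom f α).2
  have hint : IsIntegral ℤ u := by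
    have h1 : IsIntegral (𝓞 L) u := by
      refine ⟨Polynomial.X ^ 2 - Polynomial.C (RingOfIntegers.mapRingHom f α) * Polynomial.X + 1,
        by monicity!, ?_⟩
      simp only [Polynomial.eval₂_add, Polynomial.eval₂_sub, Polynomial.eval₂_mul,
          Polynomial.eval₂_pow, Polynomial.eval₂_X, Polynomial.eval₂_C, Polynomial.eval₂_one]
      exact hu
    exact isIntegral_trans (A := 𝓞 L) u h1
  let w : 𝓞 L := ⟨u, hint⟩
  have hw : w * (RingOfIntegers.mapRingHom f α - w) = 1 := by
    apply RingOfIntegers.ext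
    change u * (f α - u) = 1
    linear_combination - hu
  have hwu : IsUnit w := IsUnit.of_mul_eq_one _ hw
  have hwu' : IsUnit (RingOfIntegers.mapRingHom f α - w) :=
    IsUnit.of_mul_eq_one w (by rw [mul_comm]; exact hw)
  refine ⟨w, rfl, hwu, ?_⟩
  have := Subring.add_mem _ (unitRing_of_isUnit hwu) (unitRing_of_isUnit hwu')
  simpa using this

theorem step (F : Type) [Field F] [NumberField F] (d : ℕ) (hd : d ≠ 0) (hd2 : 2 ∣ d)
    (hR : ∀ z : 𝓞 F, (d : 𝓞 F) * z ∈ unitRing (𝓞 F))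
    (x : 𝓞 F) (hx : IsCoprime (x ^ 2 - 4) (d : 𝓞 F)) :
    ∃ (L : Type) (_ : Field L) (_ : NumberField L) (f : F →+* L),
      (∀ z : 𝓞 L, (d : 𝓞 L) * z ∈ unitRing (𝓞 L)) ∧
      RingOfIntegers.mapRingHom f x ∈ unitRing (𝓞 L) ∧
      ∀ z : 𝓞 L, ∃ (a c : 𝓞 F) (u : 𝓞 L), IsUnit u ∧
        z = RingOfIntegers.mapRingHom f a + RingOfIntegers.mapRingHom f c * u := by
  obtain ⟨β, hβ⟩ := sieve F d hd hd2 x hx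
  set α : 𝓞 F := x + d * β with hα
  obtain ⟨L, _, _, f, u, hu, hz⟩ := quad_ext F (α : F)
  obtain ⟨w, hw, hwu, hαR⟩ := quad_unit f α u hu
  have hrep : ∀ z : 𝓞 L, ∃ (a c : 𝓞 F),
        z = RingOfIntegers.mapRingHom f a + RingOfIntegers.mapRingHom f c * w := by
    intro z
    obtain ⟨a, c, hac, hc⟩ := hz z z.2
    have hcint : IsIntegral ℤ c := integral_of_sq_mul F (α ^ 2 - 4) hβ c (by
      rw [co_sub, co_pow, co_four]; exact hc)
    let c' : 𝓞 F := ⟨c, hcint⟩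
    have haint : IsIntegral ℤ a := by
      have h1 : f a = ((z - RingOfIntegers.mapRingHom f c' * w : 𝓞 L) : L) := by
        have : ((z - RingOfIntegers.mapRingHom f c' * w : 𝓞 L) : L) = (z : L) - f c * w := by
          rw [co_sub, co_mul]; rfl
        rw [this, hac, hw]
        ring
      have h2 : IsIntegral ℤ (f a) := by
        rw [h1]
        exact RingOfIntegers.isIntegral_coe _
      exact (isIntegral_algHom_iff (f.toIntAlgHom) f.injective).1 h2
    refine ⟨⟨a, haint⟩, c', ?_⟩
    apply RingOfIntegers.ext
    rw [hac, ← hw, co_add, co_mul]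
    rfl
  refine ⟨L, inferInstance, inferInstance, f, ?_, ?_, ?_⟩
  · intro z
    obtain ⟨a, c, rfl⟩ := hrep z
    have h1 := map_unitRing (RingOfIntegers.mapRingHom f) (hR a)
    have h2 := map_unitRing (RingOfIntegers.mapRingHom f) (hR c)
    have h3 := Subring.add_mem _ h1 (Subring.mul_mem _ h2 (unitRing_of_isUnit hwu))
    convert h3 using 1
    simp only [map_mul, map_natCast]
    ring
  · have h1 := map_unitRing (RingOfIntegers.mapRingHom f) (hR β)
    have h2 := Subring.sub_mem _ hαR h1
    rw [← map_sub] at h2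
    convert h2 using 2
    rw [hα]; ring
  · intro z
    obtain ⟨a, c, h⟩ := hrep z
    exact ⟨a, c, w, hwu, h⟩

theorem iterate_step (d : ℕ) (hd : d ≠ 0) (hd2 : 2 ∣ d) (m : ℕ) :
    ∀ (F : Type) [Field F] [NumberField F]
    (_ : ∀ z : 𝓞 F, (d : 𝓞 F) * z ∈ unitRing (𝓞 F))
    (l : List (𝓞 F)) (_ : l.length = m) (_ : ∀ x ∈ l, IsCoprime (x ^ 2 - 4) (d : 𝓞 F)),
    ∃ (L : Type) (_ : Field L) (_ : NumberField L) (f : F →+* L),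
      (∀ x ∈ l, RingOfIntegers.mapRingHom f x ∈ unitRing (𝓞 L)) ∧
      Subring.closure (Set.range (RingOfIntegers.mapRingHom f) ∪ {x : 𝓞 L | IsUnit x}) = ⊤ := by
  induction m with
  | zero =>
    intro F _ _ hR l hl hx
    refine ⟨F, inferInstance, inferInstance, RingHom.id F, ?_, ?_⟩
    · rw [List.length_eq_zero_iff] at hl
      simp [hl]
    · rw [eq_top_iff]
      intro z _
      exact Subring.subset_closure (Or.inl ⟨z, rfl⟩)
  | succ m ih =>
    intro F _ _ hR l hl hx
    obtain ⟨x, l', rfl⟩ := List.exists_cons_of_length_eq_add_one hl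
    obtain ⟨L, _, _, f, h1, h2, h3⟩ := step F d hd hd2 hR x (hx x (by simp))
    obtain ⟨L', _, _, f', h1', h2'⟩ := ih L h1 (l'.map (RingOfIntegers.mapRingHom f))
      (by simpa using hl) (by
        intro y hy
        obtain ⟨y', hy', rfl⟩ := List.mem_map.1 hy
        have := (hx y' (by simp [hy'])).map (RingOfIntegers.mapRingHom f)
        rwa [map_sub, map_pow, map_ofNat, map_natCast] at this)
    have hcomp : ∀ y, RingOfIntegers.mapRingHom (f'.comp f) y =
        RingOfIntegers.mapRingHom f' (RingOfIntegers.mapRingHom f y) := fun y => rfl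
    refine ⟨L', inferInstance, inferInstance, f'.comp f, ?_, ?_⟩
    · intro y hy
      rw [hcomp]
      rcases List.mem_cons.1 hy with rfl | hy
      · exact map_unitRing _ h2
      · exact h1' _ (List.mem_map.2 ⟨y, hy, rfl⟩)
    · rw [eq_top_iff, ← h2', Subring.closure_le]
      rintro y (⟨z, rfl⟩ | hy)
      · obtain ⟨a, c, u, hu, rfl⟩ := h3 z
        rw [map_add, map_mul]
        refine Subring.add_mem _ (Subring.subset_closure (Or.inl ⟨a, hcomp a⟩))
          (Subring.mul_mem _ (Subring.subset_closure (Or.inl ⟨c, hcomp c⟩))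
            (Subring.subset_closure (Or.inr (IsUnit.map _ hu))))
      · exact Subring.subset_closure (Or.inr hy)

theorem exists_integral_gen (F : Type) [Field F] [NumberField F] :
    ∃ θ : 𝓞 F, ∀ a : F, ∃ k : ℕ, k ≠ 0 ∧ ∃ b ∈ Subring.closure {θ}, (k : F) * a = (b : F) := by
  obtain ⟨t, ht⟩ := Field.exists_primitive_element ℚ F
  have htalg : IsAlgebraic ℤ t := (IsFractionRing.isAlgebraic_iff ℤ ℚ F).2
    (Algebra.IsAlgebraic.isAlgebraic t)
  obtain ⟨n, hn0, hn⟩ := htalg.exists_integral_multiple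
  let θ : 𝓞 F := ⟨n • t, hn⟩
  refine ⟨θ, ?_⟩
  intro a
  have ha : a ∈ Algebra.adjoin ℚ {t} := by
    have h1 : a ∈ IntermediateField.adjoin ℚ {t} := by rw [ht]; trivial
    rwa [← IntermediateField.mem_toSubalgebra,
      IntermediateField.adjoin_simple_toSubalgebra_of_isAlgebraic
        (Algebra.IsAlgebraic.isAlgebraic t)] at h1
  induction ha using Algebra.adjoin_induction with
  | mem x hx =>
    rw [Set.mem_singleton_iff.1 hx]
    refine ⟨n.natAbs, by simpa using hn0, ?_⟩
    have hθ : θ ∈ Subring.closure {θ} := Subring.subset_closure rfl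
    have hθc : (θ : F) = (n : F) * t := by
      change n • t = _
      rw [zsmul_eq_mul]
    rcases Int.natAbs_eq n with h | h
    · refine ⟨θ, hθ, ?_⟩
      rw [hθc, ← Int.cast_natCast, ← h]
    · refine ⟨-θ, Subring.neg_mem _ hθ, ?_⟩
      rw [co_neg, hθc, ← neg_mul, ← Int.cast_neg, ← Int.cast_natCast]
      congr 2
      omega
  | algebraMap r =>
    refine ⟨r.den, r.den_nz, (r.num : 𝓞 F), intCast_mem _ _, ?_⟩
    rw [co_int, eq_ratCast]
    have := Rat.den_mul_eq_num r
    exact_mod_cast congrArg (Rat.cast : ℚ → F) this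
  | add x y _ _ hx hy =>
    obtain ⟨k, hk, b, hb, h⟩ := hx
    obtain ⟨k', hk', b', hb', h'⟩ := hy
    refine ⟨k * k', mul_ne_zero hk hk', k' * b + k * b',
      Subring.add_mem _ (Subring.mul_mem _ (natCast_mem _ _) hb)
        (Subring.mul_mem _ (natCast_mem _ _) hb'), ?_⟩
    rw [co_add, co_mul, co_mul, co_nat, co_nat, ← h, ← h']
    push_cast
    ring
  | mul x y _ _ hx hy =>
    obtain ⟨k, hk, b, hb, h⟩ := hx
    obtain ⟨k', hk', b', hb', h'⟩ := hy
    refine ⟨k * k', mul_ne_zero hk hk', b * b', Subring.mul_mem _ hb hb', ?_⟩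
    rw [co_mul, ← h, ← h']
    push_cast
    ring

theorem start_field (K : Type) [Field K] [NumberField K] :
    ∃ (F : Type) (_ : Field F) (_ : NumberField F) (_ : K →+* F) (ζ : 𝓞 F) (d : ℕ),
      IsPrimitiveRoot ζ 5 ∧ d ≠ 0 ∧ 2 ∣ d ∧ ∀ z : 𝓞 F, (d : 𝓞 F) * z ∈ unitRing (𝓞 F) := by
  have : NumberField (CyclotomicField 5 K) :=
    IsCyclotomicExtension.numberField {5} K (CyclotomicField 5 K)
  have hz := IsCyclotomicExtension.zeta_spec 5 K (CyclotomicField 5 K)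
  obtain ⟨θ, hθ⟩ := exists_integral_gen (CyclotomicField 5 K)
  obtain ⟨F, _, _, f, u, hu, hrep⟩ := quad_ext (CyclotomicField 5 K) (θ : CyclotomicField 5 K)
  obtain ⟨w, hw, hwu, hθR⟩ := quad_unit f θ u hu
  have hζ : IsPrimitiveRoot (RingOfIntegers.mapRingHom f hz.toInteger) 5 := by
    refine hz.toInteger_isPrimitiveRoot.map_of_injective ?_
    intro a b hab
    apply RingOfIntegers.ext
    apply f.injective
    exact congrArg (fun t : 𝓞 F => (t : F)) hab
  have hclos : ∀ b ∈ Subring.closure {θ}, RingOfIntegers.mapRingHom f b ∈ unitRing (𝓞 F) := by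
    intro b hb
    have : Subring.closure {θ} ≤ (unitRing (𝓞 F)).comap (RingOfIntegers.mapRingHom f) := by
      rw [Subring.closure_le]
      intro y hy
      rw [Set.mem_singleton_iff.1 hy]
      exact hθR
    exact this hb
  have hz1 : ∀ z : 𝓞 F, ∃ k : ℕ, k ≠ 0 ∧ (k : 𝓞 F) * z ∈ unitRing (𝓞 F) := by
    intro z
    obtain ⟨a, c, hac, -⟩ := hrep z z.2
    obtain ⟨k, hk, b, hb, h⟩ := hθ a
    obtain ⟨k', hk', b', hb', h'⟩ := hθ c
    refine ⟨k * k', mul_ne_zero hk hk', ?_⟩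
    have : ((k * k' : ℕ) : 𝓞 F) * z = k' * RingOfIntegers.mapRingHom f b +
        k * (RingOfIntegers.mapRingHom f b' * w) := by
      apply RingOfIntegers.ext
      rw [co_add, co_mul, co_mul, co_mul, co_mul, co_nat, co_nat, co_nat, hac]
      have e1 : ((RingOfIntegers.mapRingHom f b : 𝓞 F) : F) = (k : F) * f a := by
        change f b = _
        rw [← h, map_mul, map_natCast]
      have e2 : ((RingOfIntegers.mapRingHom f b' : 𝓞 F) : F) = (k' : F) * f c := by
        change f b' = _
        rw [← h', map_mul, map_natCast]
      rw [e1, e2, hw]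
      push_cast
      ring
    rw [this]
    exact Subring.add_mem _ (Subring.mul_mem _ (natCast_mem _ _) (hclos b hb))
      (Subring.mul_mem _ (natCast_mem _ _)
        (Subring.mul_mem _ (hclos b' hb') (unitRing_of_isUnit hwu)))
  choose k hk0 hk using hz1
  let B := RingOfIntegers.basis F
  let D : ℕ := ∏ i, k (B i)
  have hD : D ≠ 0 := Finset.prod_ne_zero_iff.2 fun i _ => hk0 _
  have hDB : ∀ i, (D : 𝓞 F) * B i ∈ unitRing (𝓞 F) := by
    intro i
    obtain ⟨e, he⟩ : k (B i) ∣ D := Finset.dvd_prod_of_mem _ (Finset.mem_univ i)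
    rw [he]
    push_cast
    rw [mul_comm (k (B i) : 𝓞 F), mul_assoc]
    exact Subring.mul_mem _ (natCast_mem _ _) (hk _)
  refine ⟨F, inferInstance, inferInstance, f.comp (algebraMap K _), _, 2 * D, hζ,
    by omega, ⟨D, rfl⟩, ?_⟩
  intro z
  rw [← B.sum_repr z, Finset.mul_sum]
  refine Subring.sum_mem _ fun i _ => ?_
  rw [zsmul_eq_mul]
  have : ((2 * D : ℕ) : 𝓞 F) * ((B.repr z i : 𝓞 F) * B i) =
      ((2 * B.repr z i : ℤ) : 𝓞 F) * ((D : 𝓞 F) * B i) := by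
    push_cast
    ring
  rw [this]
  exact Subring.mul_mem _ (intCast_mem _ _) (hDB i)

theorem five_elements {R : Type} [CommRing R] [IsDomain R] {ζ : R} (hζ : IsPrimitiveRoot ζ 5) :
    ∃ s : Fin 5 → R, ∀ i j, i ≠ j → IsUnit (s i - s j) := by
  have hu : IsUnit ζ := hζ.isUnit (by norm_num)
  have h0 : 1 + ζ + ζ ^ 2 + ζ ^ 3 + ζ ^ 4 = 0 := by
    have := hζ.geom_sum_eq_zero (by norm_num)
    simpa [Finset.sum_range_succ] using this
  have h2 : IsUnit (1 + ζ) := IsUnit.of_mul_eq_one (-(ζ + ζ ^ 3)) (by linear_combination - h0)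
  have h3 : IsUnit (1 + ζ + ζ ^ 2) := by
    have : 1 + ζ + ζ ^ 2 = - (ζ ^ 3 * (1 + ζ)) := by linear_combination h0
    rw [this]
    exact ((hu.pow 3).mul h2).neg
  have h4 : IsUnit (1 + ζ + ζ ^ 2 + ζ ^ 3) := by
    have : 1 + ζ + ζ ^ 2 + ζ ^ 3 = - ζ ^ 4 := by linear_combination h0
    rw [this]
    exact (hu.pow 4).neg
  have key : ∀ i j : ℕ, i < j → j < 5 →
      IsUnit (∑ m ∈ Finset.range j, ζ ^ m - ∑ m ∈ Finset.range i, ζ ^ m) := by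
    intro i j hij hj
    obtain ⟨n, rfl⟩ := Nat.exists_eq_add_of_lt hij
    have e : ∑ m ∈ Finset.range (i + n + 1), ζ ^ m - ∑ m ∈ Finset.range i, ζ ^ m =
        ζ ^ i * ∑ m ∈ Finset.range (n + 1), ζ ^ m := by
      rw [add_assoc, Finset.sum_range_add, Finset.mul_sum]
      simp [pow_add]
    rw [e]
    refine (hu.pow i).mul ?_
    have : n < 4 := by omega
    interval_cases n
    · simp
    · simpa [Finset.sum_range_succ] using h2
    · simpa [Finset.sum_range_succ] using h3
    · simpa [Finset.sum_range_succ] using h4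
  refine ⟨fun i => ∑ m ∈ Finset.range i, ζ ^ m, fun i j hij => ?_⟩
  rcases lt_or_gt_of_ne hij with h | h
  · rw [← IsUnit.neg_iff, neg_sub]
    exact key _ _ h j.2
  · exact key _ _ h i.2

theorem avoid {R : Type} [CommRing R] (s : Fin 5 → R) (hs : ∀ i j, i ≠ j → IsUnit (s i - s j))
    (q : Ideal R) (hq : q.IsPrime) (y : R) :
    ∃ c : R, c ^ 2 - 4 ∉ q ∧ (c + y) ^ 2 - 4 ∉ q := by
  by_contra! H
  have h1 : ∀ i, ∃ j : Fin 4, s i - (![2, -2, 2 - y, -2 - y] : Fin 4 → R) j ∈ q := by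
    intro i
    by_cases h : s i ^ 2 - 4 ∈ q
    · have e : s i ^ 2 - 4 = (s i - 2) * (s i - -2) := by ring
      rw [e] at h
      rcases hq.mem_or_mem h with h | h
      · exact ⟨0, h⟩
      · exact ⟨1, h⟩
    · have h := H _ h
      have e : (s i + y) ^ 2 - 4 = (s i - (2 - y)) * (s i - (-2 - y)) := by ring
      rw [e] at h
      rcases hq.mem_or_mem h with h | h
      · exact ⟨2, h⟩
      · exact ⟨3, h⟩
  choose g hg using h1
  obtain ⟨i, j, hij, h⟩ := Fintype.exists_ne_map_eq_of_card_lt g (by simp)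
  have h2 := q.sub_mem (hg i) (hg j)
  rw [h, sub_sub_sub_cancel_right] at h2
  exact hq.ne_top (Ideal.eq_top_of_isUnit_mem _ h2 (hs i j hij))

theorem good_diff (F : Type) [Field F] [NumberField F] {ζ : 𝓞 F} (hζ : IsPrimitiveRoot ζ 5)
    (d : ℕ) (hd : d ≠ 0) (y : 𝓞 F) :
    ∃ c : 𝓞 F, IsCoprime (c ^ 2 - 4) (d : 𝓞 F) ∧ IsCoprime ((c + y) ^ 2 - 4) (d : 𝓞 F) := by
  classical
  obtain ⟨s, hs⟩ := five_elements hζ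
  have hd0 : (d : 𝓞 F) ≠ 0 := by exact_mod_cast hd
  have hfin : {q : Ideal (𝓞 F) | q.IsPrime ∧ (d : 𝓞 F) ∈ q}.Finite := by
    have h1 : Finite {I : Ideal (𝓞 F) // I ∣ Ideal.span {(d : 𝓞 F)}} := by
      have : Fintype {I : Ideal (𝓞 F) // I ∣ Ideal.span {(d : 𝓞 F)}} :=
        UniqueFactorizationMonoid.fintypeSubtypeDvd _ (by simpa using hd0)
      exact Finite.of_fintype _
    have h2 : {I : Ideal (𝓞 F) | I ∣ Ideal.span {(d : 𝓞 F)}}.Finite := h1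
    refine h2.subset ?_
    rintro q ⟨-, hq⟩
    simpa [Ideal.dvd_span_singleton] using hq
  choose! c hc1 hc2 using fun (q : Ideal (𝓞 F)) (hq : q.IsPrime) => avoid s hs q hq y
  obtain ⟨x, hx⟩ := IsDedekindDomain.exists_forall_sub_mem_ideal (s := hfin.toFinset)
    (fun q => q) (fun _ => 1)
    (by
      intro q hq
      rw [Set.Finite.mem_toFinset] at hq
      refine Ideal.prime_of_isPrime ?_ hq.1
      rintro rfl
      exact hd0 (by simpa using hq.2))
    (by intro q _ q' _ h; exact h) (fun q => c q)
  have main : ∀ t : 𝓞 F, (∀ q : Ideal (𝓞 F), q.IsPrime → (c q + t) ^ 2 - 4 ∉ q) →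
      IsCoprime ((x + t) ^ 2 - 4) (d : 𝓞 F) := by
    intro t ht
    rw [← Ideal.isCoprime_span_singleton_iff, Ideal.isCoprime_iff_sup_eq]
    by_contra hne
    obtain ⟨q, hqm, hq⟩ := Ideal.exists_le_maximal _ hne
    have h1 : (x + t) ^ 2 - 4 ∈ q :=
      hq (Ideal.mem_sup_left (Ideal.mem_span_singleton_self _))
    have h2 : (d : 𝓞 F) ∈ q :=
      hq (Ideal.mem_sup_right (Ideal.mem_span_singleton_self _))
    have h3 := hx q (by rw [Set.Finite.mem_toFinset]; exact ⟨hqm.isPrime, h2⟩)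
    rw [pow_one] at h3
    apply ht q hqm.isPrime
    have e : (c q + t) ^ 2 - 4 = ((x + t) ^ 2 - 4) - (x - c q) * (x + c q + 2 * t) := by ring
    rw [e]
    exact q.sub_mem h1 (q.mul_mem_right _ h3)
  refine ⟨x, ?_, main y hc2⟩
  have := main 0 (by simpa using hc1)
  simpa using this

theorem final (K : Type) [Field K] [NumberField K] :
    ∃ (L : Type) (_ : Field L) (_ : NumberField L) (_ : Algebra K L),
      Subring.closure {x : 𝓞 L | IsUnit x} = ⊤ := by
  obtain ⟨F, _, _, f, ζ, d, hζ, hd, hd2, hR⟩ := start_field K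
  choose c hc1 hc2 using good_diff F hζ d hd
  let B := RingOfIntegers.basis F
  let l : List (𝓞 F) := (Finset.univ.toList.map fun i => c (B i)) ++
    (Finset.univ.toList.map fun i => c (B i) + B i)
  obtain ⟨L, _, _, g, h1, h2⟩ := iterate_step d hd hd2 _ F hR l rfl (by
    intro x hx
    rcases List.mem_append.1 hx with h | h
    · obtain ⟨i, -, rfl⟩ := List.mem_map.1 h
      exact hc1 _
    · obtain ⟨i, -, rfl⟩ := List.mem_map.1 h
      exact hc2 _)
  refine ⟨L, inferInstance, inferInstance, (g.comp f).toAlgebra, ?_⟩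
  rw [eq_top_iff, ← h2, Subring.closure_le]
  have hB : ∀ i, RingOfIntegers.mapRingHom g (B i) ∈ unitRing (𝓞 L) := by
    intro i
    have e1 := h1 (c (B i)) (List.mem_append.2 (Or.inl (List.mem_map.2 ⟨i, by simp, rfl⟩)))
    have e2 := h1 (c (B i) + B i) (List.mem_append.2 (Or.inr (List.mem_map.2 ⟨i, by simp, rfl⟩)))
    have := Subring.sub_mem _ e2 e1
    rwa [← map_sub, add_sub_cancel_left] at this
  rintro z (⟨y, rfl⟩ | hz)
  · rw [← B.sum_repr y, map_sum]
    refine Subring.sum_mem _ fun i _ => ?_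
    rw [zsmul_eq_mul, map_mul, map_intCast]
    exact Subring.mul_mem _ (intCast_mem _ _) (hB i)
  · exact Subring.subset_closure hz

/-- For every number field `K` there is a finite extension `L` of `K` such that the ring of
integers of `L` is generated (as a ring) by its units. -/
theorem exists_extension_ringOfIntegers_generated_by_units
    (K : Type) [Field K] [NumberField K] :
    ∃ (L : Type) (_ : Field L) (_ : NumberField L) (_ : Algebra K L),
      Subring.closure {x : 𝓞 L | IsUnit x} = ⊤ := by
  exact final K
end
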